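/- arXiv:2009.13848 — 7 statements merged into one kernel-verified Lean document; each statement's English description precedes it below -/
import Mathlib

section
/- Let m ∈ ℝ and v > 0, and let μ be the log-normal distribution on ℝ₊ = (0,∞), i.e. the push-forward of the normal distribution N(m,v) under the exponential map exp : ℝ → ℝ₊. Then μ is ⊛-strongly log-unimodal: for every log-unimodal probability measure ν on ℝ₊, the classical multiplicative convolution μ⊛ν is log-unimodal. -/
/-!
Taking logarithms reduces the claim to `ℝ`: the logarithm of `μ ⊛ ν` is the additive convolution
of `N(m, v)` with the unimodal probability measure `σ = log_* ν`, so its density is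
`h x = ∫ g (x - u) dσ(u)`, with `g` the Gaussian density.

The unimodality of `h` rests on a sign-change argument applied to finite differences, which
avoids differentiating. Fix `δ > 0` and write `σ = c₀ δ_c + f dx`. Then `h (x + δ) - h x` is the
integral of `g (x - u)` against the signed measure
`c₀ (δ_{c-δ} - δ_c) + (f (u + δ) - f u) du`, which changes sign at most once, from `+` to `-`, at
some `t ∈ [c - δ, c]` (`exists_sign_change`): on `(c - δ, c)` the function `f (u + δ) - f u` is
non-increasing. Log-concavity of `g` makes `g (x₂ - u) / g (x₁ - u)` non-decreasing in `u` for
`x₁ ≤ x₂` (`gaussianPDFReal_tp2`); comparing with the value `κ` of this ratio at `u = t` gives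
`h (x₂ + δ) - h x₂ ≤ κ (h (x₁ + δ) - h x₁)`. Hence if `h` does not increase over one step of
length `δ`, it does not increase over any later such step (`conv_step`).

By continuity of `h`, after any strict decrease `h x > h y` with `x < y`, no value beyond `y`
exceeds `h y` (`le_of_drop`). Since `h` is positive and vanishes at infinity it attains a maximum,
and the maximum point is a mode.
-/

open MeasureTheory Set Filter Topology
open scoped ENNReal NNReal

noncomputable section

/-- A positive Borel measure `τ` on `ℝ` is *unimodal with mode `c`* if
`τ = c₀ • δ_c + f(x) dx` where `c₀ ∈ [0,∞]` and `f : ℝ → [0,∞)` is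
non-decreasing on `(-∞, c)` and non-increasing on `(c, ∞)`. -/
def IsUnimodalWithMode (τ : Measure ℝ) (c : ℝ) : Prop :=
  ∃ (c₀ : ℝ≥0∞) (f : ℝ → ℝ),
    (∀ x, 0 ≤ f x) ∧ MonotoneOn f (Set.Iio c) ∧ AntitoneOn f (Set.Ioi c) ∧
    τ = c₀ • (Measure.dirac c) + volume.withDensity (fun x => ENNReal.ofReal (f x))

/-- A measure on `ℝ` is unimodal if it is unimodal with some mode. -/
def IsUnimodal (τ : Measure ℝ) : Prop := ∃ c, IsUnimodalWithMode τ c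

/-- A positive Borel measure `μ` on `ℝ₊ = (0,∞)` is *log-unimodal with mode `a`* if its
push-forward under `log` is unimodal with mode `log a`. -/
def IsLogUnimodalWithMode (μ : Measure ℝ) (a : ℝ) : Prop :=
  IsUnimodalWithMode (μ.map Real.log) (Real.log a)

/-- A measure on `ℝ₊` is log-unimodal if it is log-unimodal with some mode `a ∈ ℝ₊`. -/
def IsLogUnimodal (μ : Measure ℝ) : Prop := ∃ a, 0 < a ∧ IsLogUnimodalWithMode μ a

/-- Classical multiplicative convolution `μ ⊛ ν`: the push-forward of `μ ⊗ ν`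
under `(x, y) ↦ x * y`. -/
def mulConv (μ ν : Measure ℝ) : Measure ℝ := (μ.prod ν).map (fun p => p.1 * p.2)

/-- Classical additive convolution `μ ∗ ν`: the push-forward of `μ ⊗ ν`
under `(x, y) ↦ x + y`. -/
def addConv (μ ν : Measure ℝ) : Measure ℝ := (μ.prod ν).map (fun p => p.1 + p.2)

/-- A measure `μ` on `ℝ₊` is multiplicatively symmetric if `μ = μ⁻¹`, where `μ⁻¹` is
the push-forward of `μ` under `x ↦ 1/x`. -/
def MulSymmetric (μ : Measure ℝ) : Prop := μ = μ.map (fun x => x⁻¹)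

/-- A probability measure `μ` on `ℝ₊` is `⊛`-strongly log-unimodal if `μ ⊛ ν` is
log-unimodal for every log-unimodal probability measure `ν` on `ℝ₊`. -/
def StronglyLogUnimodal (μ : Measure ℝ) : Prop :=
  ∀ ν : Measure ℝ, IsProbabilityMeasure ν → ν (Set.Iic 0) = 0 → IsLogUnimodal ν →
    IsLogUnimodal (mulConv μ ν)

/-- A probability measure `ρ` on `ℝ` is `∗`-strongly unimodal if `ρ ∗ σ` is unimodal
for every unimodal probability measure `σ` on `ℝ`. -/
def StronglyUnimodal (ρ : Measure ℝ) : Prop :=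
  ∀ σ : Measure ℝ, IsProbabilityMeasure σ → IsUnimodal σ → IsUnimodal (addConv ρ σ)

/-! ### The Gaussian density -/

open ProbabilityTheory in
/-- Total positivity of order two of the kernel `(x, u) ↦ g (x - u)`, i.e. log-concavity of the
Gaussian density `g`. -/
lemma gaussianPDFReal_tp2 (m : ℝ) (v : ℝ≥0) {x₁ x₂ u t : ℝ}
    (hx : x₁ ≤ x₂) (hu : u ≤ t) :
    gaussianPDFReal m v (x₂ - u) * gaussianPDFReal m v (x₁ - t) ≤
      gaussianPDFReal m v (x₂ - t) * gaussianPDFReal m v (x₁ - u) := by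
  simp only [gaussianPDFReal]
  have key : Real.exp (-(x₂ - u - m) ^ 2 / (2 * v)) * Real.exp (-(x₁ - t - m) ^ 2 / (2 * v)) ≤
      Real.exp (-(x₂ - t - m) ^ 2 / (2 * v)) * Real.exp (-(x₁ - u - m) ^ 2 / (2 * v)) := by
    rw [← Real.exp_add, ← Real.exp_add, Real.exp_le_exp, ← add_div, ← add_div]
    apply div_le_div_of_nonneg_right _ (by positivity)
    nlinarith [mul_nonneg (sub_nonneg.2 hx) (sub_nonneg.2 hu)]
  have hK : 0 ≤ (√(2 * Real.pi * v))⁻¹ * (√(2 * Real.pi * v))⁻¹ := by positivity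
  calc _ = (√(2 * Real.pi * v))⁻¹ * (√(2 * Real.pi * v))⁻¹ *
        (Real.exp (-(x₂ - u - m) ^ 2 / (2 * v)) * Real.exp (-(x₁ - t - m) ^ 2 / (2 * v))) := by
        ring
    _ ≤ _ := mul_le_mul_of_nonneg_left key hK
    _ = _ := by ring

lemma continuous_gaussianPDFReal' (m : ℝ) (v : ℝ≥0) :
    Continuous (ProbabilityTheory.gaussianPDFReal m v) := by
  unfold ProbabilityTheory.gaussianPDFReal
  fun_prop

lemma gaussianPDFReal_le (m : ℝ) (v : ℝ≥0) (x : ℝ) :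
    ProbabilityTheory.gaussianPDFReal m v x ≤ (√(2 * Real.pi * v))⁻¹ := by
  unfold ProbabilityTheory.gaussianPDFReal
  apply mul_le_of_le_one_right (by positivity)
  rw [Real.exp_le_one_iff, neg_div]
  have : 0 ≤ (x - m) ^ 2 / (2 * v) := by positivity
  linarith

lemma tendsto_gaussianPDFReal_cocompact (m : ℝ) {v : ℝ≥0} (hv : 0 < v) :
    Tendsto (ProbabilityTheory.gaussianPDFReal m v) (cocompact ℝ) (𝓝 0) := by
  unfold ProbabilityTheory.gaussianPDFReal
  rw [← mul_zero (√(2 * Real.pi * v))⁻¹]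
  refine Tendsto.const_mul _ (Real.tendsto_exp_atBot.comp ?_)
  have h1 : Tendsto (fun x : ℝ => |x - m|) (cocompact ℝ) atTop :=
    tendsto_norm_cocompact_atTop.comp (Homeomorph.subRight m).isClosedEmbedding.tendsto_cocompact
  have h2 := (tendsto_pow_atTop (two_ne_zero)).comp h1
  have hv' : (0 : ℝ) < 2 * v := by positivity
  have h3 := tendsto_neg_atTop_atBot.comp (h2.atTop_div_const hv')
  refine h3.congr fun x => ?_
  simp [neg_div]

/-! ### Sign changes of increments of unimodal functions -/

/-- The increment `f (u + δ) - f u` of a function with mode `c` changes sign at most once, from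
`+` to `-`. The points `c - δ` and `c`, where `f` is evaluated at its mode, are excluded. -/
lemma exists_sign_change {f : ℝ → ℝ} {c δ : ℝ} (hδ : 0 < δ)
    (hm : MonotoneOn f (Iio c)) (ha : AntitoneOn f (Ioi c)) :
    ∃ t, c - δ ≤ t ∧ t ≤ c ∧
      (∀ u, u < t → u ≠ c - δ → 0 ≤ f (u + δ) - f u) ∧
      (∀ u, t < u → u ≠ c → f (u + δ) - f u ≤ 0) := by
  set S : Set ℝ := insert (c - δ) {u | u ∈ Ioo (c - δ) c ∧ 0 ≤ f (u + δ) - f u} with hS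
  have hne : S.Nonempty := ⟨c - δ, mem_insert _ _⟩
  have hub : ∀ u ∈ S, u ≤ c := by
    rintro u (rfl | hu)
    · linarith
    · exact hu.1.2.le
  have hbd : BddAbove S := ⟨c, hub⟩
  refine ⟨sSup S, le_csSup hbd (mem_insert _ _), csSup_le hne hub, ?_, ?_⟩
  · intro u hut hu
    rcases lt_or_gt_of_ne hu with h | h
    · have := hm (show u ∈ Iio c by simp only [mem_Iio]; linarith)
        (show u + δ ∈ Iio c by simp only [mem_Iio]; linarith) (by linarith)
      linarith
    · obtain ⟨w, hw, huw⟩ := exists_lt_of_lt_csSup hne hut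
      rcases hw with rfl | hw
      · linarith
      · obtain ⟨⟨hw1, hw2⟩, hw3⟩ := hw
        have h1 := hm (show u ∈ Iio c by simp only [mem_Iio]; linarith)
          (show w ∈ Iio c from hw2) huw.le
        have h2 := ha (show u + δ ∈ Ioi c by simp only [mem_Ioi]; linarith)
          (show w + δ ∈ Ioi c by simp only [mem_Ioi]; linarith) (by linarith)
        linarith
  · intro u hut hu
    rcases lt_or_gt_of_ne hu with h | h
    · by_contra! hcon
      have hmem : u ∈ S := Or.inr ⟨⟨lt_of_le_of_lt (le_csSup hbd (mem_insert _ _)) hut, h⟩, hcon.le⟩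
      exact absurd (le_csSup hbd hmem) (not_le.2 hut)
    · have := ha (show u ∈ Ioi c from h)
        (show u + δ ∈ Ioi c by simp only [mem_Ioi]; linarith) (by linarith)
      linarith

/-! ### The density of the convolution -/

/-- The density of `N(m, v) ∗ σ`. -/
def gaussConv (m : ℝ) (v : ℝ≥0) (σ : Measure ℝ) (x : ℝ) : ℝ :=
  ∫ u, ProbabilityTheory.gaussianPDFReal m v (x - u) ∂σ

lemma integrable_gaussianPDFReal_sub (m : ℝ) (v : ℝ≥0) (σ : Measure ℝ) [IsFiniteMeasure σ]
    (x : ℝ) : Integrable (fun u => ProbabilityTheory.gaussianPDFReal m v (x - u)) σ := by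
  refine Integrable.of_bound (C := (√(2 * Real.pi * v))⁻¹) ?_ (ae_of_all _ fun u => ?_)
  · exact ((continuous_gaussianPDFReal' m v).comp (by fun_prop)).aestronglyMeasurable
  · rw [Real.norm_of_nonneg (ProbabilityTheory.gaussianPDFReal_nonneg _ _ _)]
    exact gaussianPDFReal_le _ _ _

lemma continuous_gaussConv (m : ℝ) (v : ℝ≥0) (σ : Measure ℝ) [IsFiniteMeasure σ] :
    Continuous (gaussConv m v σ) := by
  refine continuous_of_dominated (bound := fun _ => (√(2 * Real.pi * v))⁻¹) ?_ ?_ ?_ ?_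
  · exact fun x => (integrable_gaussianPDFReal_sub m v σ x).aestronglyMeasurable
  · refine fun x => ae_of_all _ fun u => ?_
    rw [Real.norm_of_nonneg (ProbabilityTheory.gaussianPDFReal_nonneg _ _ _)]
    exact gaussianPDFReal_le _ _ _
  · exact integrable_const _
  · exact ae_of_all _ fun u => (continuous_gaussianPDFReal' m v).comp (by fun_prop)

lemma gaussConv_pos (m : ℝ) {v : ℝ≥0} (hv : 0 < v) (σ : Measure ℝ) [IsProbabilityMeasure σ]
    (x : ℝ) : 0 < gaussConv m v σ x := by
  unfold gaussConv
  rw [integral_pos_iff_support_of_nonneg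
    (fun u => ProbabilityTheory.gaussianPDFReal_nonneg _ _ _)
    (integrable_gaussianPDFReal_sub m v σ x)]
  have : Function.support (fun u => ProbabilityTheory.gaussianPDFReal m v (x - u)) = univ := by
    ext u
    simpa using (ProbabilityTheory.gaussianPDFReal_pos m v (x - u) hv.ne').ne'
  rw [this]
  simp

lemma tendsto_gaussConv (m : ℝ) {v : ℝ≥0} (hv : 0 < v) (σ : Measure ℝ) [IsFiniteMeasure σ] :
    Tendsto (gaussConv m v σ) (cocompact ℝ) (𝓝 0) := by
  have : Tendsto (gaussConv m v σ) (cocompact ℝ) (𝓝 (∫ _, (0 : ℝ) ∂σ)) := by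
    have hcg : (cocompact ℝ).IsCountablyGenerated := by
      rw [cocompact_eq_atBot_atTop]
      infer_instance
    refine tendsto_integral_filter_of_dominated_convergence (fun _ => (√(2 * Real.pi * v))⁻¹)
      ?_ ?_ ?_ ?_
    · exact Eventually.of_forall fun x =>
        (integrable_gaussianPDFReal_sub m v σ x).aestronglyMeasurable
    · refine Eventually.of_forall fun x => ae_of_all _ fun u => ?_
      rw [Real.norm_of_nonneg (ProbabilityTheory.gaussianPDFReal_nonneg _ _ _)]
      exact gaussianPDFReal_le _ _ _
    · exact integrable_const _
    · exact ae_of_all _ fun u => (tendsto_gaussianPDFReal_cocompact m hv).comp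
        (Homeomorph.subRight u).isClosedEmbedding.tendsto_cocompact
  simpa using this

lemma aemeasurable_of_mode {f : ℝ → ℝ} {c : ℝ}
    (hm : MonotoneOn f (Iio c)) (ha : AntitoneOn f (Ioi c)) : AEMeasurable f volume := by
  have h1 := aemeasurable_restrict_of_monotoneOn (μ := volume) measurableSet_Iio hm
  have h2 := aemeasurable_restrict_of_antitoneOn (μ := volume) measurableSet_Ioi ha
  have h3 := aemeasurable_union_iff.2 ⟨h1, h2⟩
  rwa [Iio_union_Ioi, Measure.restrict_eq_self_of_ae_mem] at h3
  exact compl_mem_ae_iff.2 (by simp)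

/-- Explicit form of `gaussConv` for a unimodal probability measure; in particular the mass of
the atom is finite and the density is integrable. -/
lemma gaussConv_eq (m : ℝ) (v : ℝ≥0) {σ : Measure ℝ} [IsProbabilityMeasure σ]
    {c : ℝ} (hσ : IsUnimodalWithMode σ c) :
    ∃ (a : ℝ) (f : ℝ → ℝ), 0 ≤ a ∧ Integrable f volume ∧
      MonotoneOn f (Iio c) ∧ AntitoneOn f (Ioi c) ∧
      ∀ x, gaussConv m v σ x = a * ProbabilityTheory.gaussianPDFReal m v (x - c) +
        ∫ u, ProbabilityTheory.gaussianPDFReal m v (x - u) * f u := by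
  obtain ⟨c₀, f, hf, hm, ha, rfl⟩ := hσ
  set D := volume.withDensity (fun x => ENNReal.ofReal (f x)) with hD
  have hfm := aemeasurable_of_mode hm ha
  have hfin : c₀ • Measure.dirac c univ + D univ = 1 := by
    have := measure_univ (μ := c₀ • Measure.dirac c + D)
    simpa only [Measure.add_apply, Measure.smul_apply] using this
  have hc0 : c₀ ≠ ∞ := by
    rintro rfl
    simp at hfin
  have hDu : D univ ≠ ∞ := by
    intro h
    rw [h] at hfin
    simp at hfin
  have : IsFiniteMeasure D := ⟨lt_top_iff_ne_top.2 hDu⟩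
  have hfi : Integrable f volume := by
    refine ⟨hfm.aestronglyMeasurable, ?_⟩
    rw [hasFiniteIntegral_iff_ofReal (ae_of_all _ hf)]
    simpa [hD] using lt_top_iff_ne_top.2 hDu
  refine ⟨c₀.toReal, f, ENNReal.toReal_nonneg, hfi, hm, ha, fun x => ?_⟩
  unfold gaussConv
  rw [integral_add_measure, integral_smul_measure, integral_dirac, hD,
    integral_withDensity_eq_integral_toReal_smul₀ hfm.ennreal_ofReal (by simp)]
  · simp only [smul_eq_mul]
    congr 1
    refine integral_congr_ae (ae_of_all _ fun u => ?_)
    simp only [ENNReal.toReal_ofReal (hf u)]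
    ring
  · exact (integrable_gaussianPDFReal_sub m v _ x).smul_measure hc0
  · exact integrable_gaussianPDFReal_sub m v _ x

lemma integrable_pdf_mul (m : ℝ) (v : ℝ≥0) {f : ℝ → ℝ} (hf : Integrable f volume) (x : ℝ) :
    Integrable (fun u => ProbabilityTheory.gaussianPDFReal m v (x - u) * f u) volume := by
  refine hf.bdd_mul (c := (√(2 * Real.pi * v))⁻¹) ?_ (ae_of_all _ fun u => ?_)
  · exact ((continuous_gaussianPDFReal' m v).comp (by fun_prop)).aestronglyMeasurable
  · rw [Real.norm_of_nonneg (ProbabilityTheory.gaussianPDFReal_nonneg _ _ _)]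
    exact gaussianPDFReal_le _ _ _

/-! ### Unimodality of the density -/

/-- If the density does not increase over one step of length `δ`, it does not increase over any
later step of the same length. -/
lemma conv_step (m : ℝ) {v : ℝ≥0} (hv : 0 < v) {σ : Measure ℝ} [IsProbabilityMeasure σ]
    {c : ℝ} (hσ : IsUnimodalWithMode σ c) {δ x₁ x₂ : ℝ} (hδ : 0 < δ) (hx : x₁ ≤ x₂)
    (h : gaussConv m v σ (x₁ + δ) ≤ gaussConv m v σ x₁) :
    gaussConv m v σ (x₂ + δ) ≤ gaussConv m v σ x₂ := by
  obtain ⟨a, f, ha0, hfi, hm, ha, hE⟩ := gaussConv_eq m v hσ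
  obtain ⟨t, ht1, ht2, hpos, hneg⟩ := exists_sign_change hδ hm ha
  set g := ProbabilityTheory.gaussianPDFReal m v with hg
  have hfi' : Integrable (fun u => f (u + δ)) volume := hfi.comp_add_right δ
  have hdiff : ∀ x, gaussConv m v σ (x + δ) - gaussConv m v σ x =
      a * (g (x - (c - δ)) - g (x - c)) + ∫ u, g (x - u) * (f (u + δ) - f u) := by
    intro x
    have h1 : ∫ u, g (x + δ - u) * f u = ∫ u, g (x - u) * f (u + δ) := by
      rw [← integral_add_right_eq_self _ δ]
      refine integral_congr_ae (ae_of_all _ fun u => ?_)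
      simp only [add_sub_add_right_eq_sub]
    have h2 : ∫ u, g (x - u) * (f (u + δ) - f u) =
        (∫ u, g (x - u) * f (u + δ)) - ∫ u, g (x - u) * f u := by
      rw [← integral_sub (integrable_pdf_mul m v hfi' x) (integrable_pdf_mul m v hfi x)]
      simp only [mul_sub, hg]
    rw [hE, hE, h1, h2, show x - (c - δ) = x + δ - c by ring]
    ring
  have hgp : 0 < g (x₁ - t) := ProbabilityTheory.gaussianPDFReal_pos _ _ _ hv.ne'
  set κ := g (x₂ - t) / g (x₁ - t) with hκ
  have hκ0 : 0 ≤ κ := div_nonneg (ProbabilityTheory.gaussianPDFReal_nonneg _ _ _) hgp.le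
  have hle : ∀ u, u ≤ t → g (x₂ - u) ≤ κ * g (x₁ - u) := by
    intro u hu
    rw [hκ, div_mul_eq_mul_div, le_div_iff₀ hgp]
    exact gaussianPDFReal_tp2 m v hx hu
  have hge : ∀ u, t ≤ u → κ * g (x₁ - u) ≤ g (x₂ - u) := by
    intro u hu
    rw [hκ, div_mul_eq_mul_div, div_le_iff₀ hgp]
    exact gaussianPDFReal_tp2 m v hx hu
  have hint : ∫ u, g (x₂ - u) * (f (u + δ) - f u) ≤
      κ * ∫ u, g (x₁ - u) * (f (u + δ) - f u) := by
    rw [← integral_const_mul]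
    refine integral_mono_ae (integrable_pdf_mul m v (hfi'.sub hfi) x₂)
      ((integrable_pdf_mul m v (hfi'.sub hfi) x₁).const_mul κ) ?_
    have hae : ∀ᵐ u ∂(volume : Measure ℝ), u ≠ c - δ ∧ u ≠ c :=
      (Measure.ae_ne volume (c - δ)).and (Measure.ae_ne volume c)
    filter_upwards [hae] with u hu
    rw [← mul_assoc]
    rcases lt_trichotomy u t with hut | hut | hut
    · exact mul_le_mul_of_nonneg_right (hle u hut.le) (hpos u hut hu.1)
    · rw [le_antisymm (hle u hut.le) (hge u hut.ge)]
    · exact mul_le_mul_of_nonpos_right (hge u hut.le) (hneg u hut hu.2)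
  have hatom : a * (g (x₂ - (c - δ)) - g (x₂ - c)) ≤
      κ * (a * (g (x₁ - (c - δ)) - g (x₁ - c))) := by
    have := mul_le_mul_of_nonneg_left (sub_le_sub (hle _ ht1) (hge _ ht2)) ha0
    linarith
  have h1 := hdiff x₁
  have h2 := hdiff x₂
  have h3 : κ * (gaussConv m v σ (x₁ + δ) - gaussConv m v σ x₁) ≤ 0 :=
    mul_nonpos_of_nonneg_of_nonpos hκ0 (by linarith)
  rw [h1, mul_add] at h3
  linarith

/-- Passage from steps of fixed length to arbitrary points: split `[x, y]` into `n` equal steps,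
one of which is decreasing, and approximate `z` by points `y + j (y - x) / n`. -/
lemma le_of_drop {h : ℝ → ℝ} (hc : Continuous h)
    (hstep : ∀ δ x₁ x₂, 0 < δ → x₁ ≤ x₂ → h (x₁ + δ) ≤ h x₁ → h (x₂ + δ) ≤ h x₂)
    {x y z : ℝ} (hxy : x < y) (hyz : y ≤ z) (hlt : h y < h x) : h z ≤ h y := by
  by_contra! hcon
  obtain ⟨ε, hε, hball⟩ := Metric.eventually_nhds_iff.1 (hc.continuousAt.eventually_const_lt hcon)
  obtain ⟨n, hn⟩ := exists_nat_gt ((y - x) / ε)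
  have hd : 0 < y - x := sub_pos.2 hxy
  have hn0 : (0 : ℝ) < n := lt_trans (by positivity) hn
  set δ := (y - x) / n with hδd
  have hδ : 0 < δ := by positivity
  have hδε : δ < ε := by
    rw [hδd, div_lt_iff₀ hn0]
    rwa [div_lt_iff₀ hε, mul_comm] at hn
  have hnδ : x + n * δ = y := by rw [hδd]; field_simp; ring
  have hdec : ∃ k : ℕ, k < n ∧ h (x + k * δ + δ) ≤ h (x + k * δ) := by
    by_contra! hno
    have : ∀ k : ℕ, k ≤ n → h x ≤ h (x + k * δ) := by
      intro k
      induction k with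
      | zero => simp
      | succ k ih =>
        intro hk
        refine (ih (by omega)).trans ((hno k (by omega)).le.trans (le_of_eq ?_))
        congr 1
        push_cast
        ring
    have := this n le_rfl
    rw [hnδ] at this
    linarith
  obtain ⟨k, hk, hkd⟩ := hdec
  have hky : x + k * δ ≤ y := by
    rw [← hnδ]
    have : (k : ℝ) ≤ n := by exact_mod_cast hk.le
    nlinarith
  have hall : ∀ j : ℕ, h (y + j * δ) ≤ h y := by
    intro j
    induction j with
    | zero => simp
    | succ j ih =>
      refine le_trans (le_of_eq ?_) ((hstep δ (x + k * δ) (y + j * δ) hδ ?_ hkd).trans ih)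
      · congr 1
        push_cast
        ring
      · have : (0 : ℝ) ≤ j * δ := by positivity
        linarith
  have hq : 0 ≤ (z - y) / δ := div_nonneg (sub_nonneg.2 hyz) hδ.le
  have hj1 := Nat.floor_le hq
  have hj2 := Nat.lt_floor_add_one ((z - y) / δ)
  rw [le_div_iff₀ hδ] at hj1
  rw [div_lt_iff₀ hδ] at hj2
  refine absurd (hball (y := y + ⌊(z - y) / δ⌋₊ * δ) ?_) (not_lt.2 (hall _))
  rw [Real.dist_eq, abs_lt]
  constructor <;> linarith

lemma exists_mode_gaussConv (m : ℝ) {v : ℝ≥0} (hv : 0 < v) {σ : Measure ℝ}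
    [IsProbabilityMeasure σ] (hσ : IsUnimodal σ) :
    ∃ c, MonotoneOn (gaussConv m v σ) (Iio c) ∧ AntitoneOn (gaussConv m v σ) (Ioi c) := by
  obtain ⟨c, hσ⟩ := hσ
  have hc := continuous_gaussConv m v σ
  have hdrop : ∀ {x y z : ℝ}, x < y → y ≤ z → gaussConv m v σ y < gaussConv m v σ x →
      gaussConv m v σ z ≤ gaussConv m v σ y :=
    le_of_drop hc fun δ x₁ x₂ hδ hx h => conv_step m hv hσ hδ hx h
  obtain ⟨M, hM⟩ := hc.exists_forall_ge' 0
    (((tendsto_gaussConv m hv σ).eventually_lt_const (gaussConv_pos m hv σ 0)).mono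
      fun _ h => h.le)
  refine ⟨M, fun x _ y hy hxy => ?_, fun y hy z _ hyz => ?_⟩
  · rcases hxy.eq_or_lt with rfl | hxy
    · rfl
    by_contra! hcon
    have := hdrop hxy (le_of_lt hy) hcon
    linarith [hM x]
  · rcases (hM y).eq_or_lt with h | h
    · exact (hM z).trans h.ge
    · exact hdrop hy hyz h

/-! ### Reduction to the additive convolution -/

lemma addConv_gaussianReal (m : ℝ) {v : ℝ≥0} (hv : 0 < v) (σ : Measure ℝ)
    [IsProbabilityMeasure σ] :
    addConv (ProbabilityTheory.gaussianReal m v) σ =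
      volume.withDensity (fun x => ENNReal.ofReal (gaussConv m v σ x)) := by
  have hgm := (continuous_gaussianPDFReal' m v).measurable
  ext s hs
  have hadd : Measurable (fun p : ℝ × ℝ => p.1 + p.2) := by fun_prop
  rw [addConv, Measure.map_apply hadd hs, Measure.prod_apply_symm (hadd hs), withDensity_apply _ hs]
  have h1 : ∀ y, ProbabilityTheory.gaussianReal m v
      ((fun x => (x, y)) ⁻¹' ((fun p : ℝ × ℝ => p.1 + p.2) ⁻¹' s)) =
      ∫⁻ x in s, ENNReal.ofReal (ProbabilityTheory.gaussianPDFReal m v (x - y)) := by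
    intro y
    have := Measure.map_apply (μ := ProbabilityTheory.gaussianReal m v)
      (measurable_add_const y) hs
    rw [ProbabilityTheory.gaussianReal_map_add_const,
      ProbabilityTheory.gaussianReal_apply _ hv.ne'] at this
    simp only [ProbabilityTheory.gaussianPDFReal_sub]
    exact this.symm
  simp only [h1]
  rw [lintegral_lintegral_swap]
  · refine lintegral_congr fun x => ?_
    rw [gaussConv, ofReal_integral_eq_lintegral_ofReal (integrable_gaussianPDFReal_sub m v σ x)
      (ae_of_all _ fun u => ProbabilityTheory.gaussianPDFReal_nonneg _ _ _)]
  · exact (hgm.comp (measurable_snd.sub measurable_fst)).ennreal_ofReal.aemeasurable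

/-- On `(0, ∞)` the logarithm turns multiplicative into additive convolution. -/
lemma map_log_mulConv (ρ ν : Measure ℝ) [SFinite ρ] [SFinite ν] (hν : ν (Iic 0) = 0) :
    (mulConv (ρ.map Real.exp) ν).map Real.log = addConv ρ (ν.map Real.log) := by
  have hν' : ν = (ν.map Real.log).map Real.exp := by
    rw [Measure.map_map Real.measurable_exp Real.measurable_log]
    have : Real.exp ∘ Real.log =ᵐ[ν] id := by
      have h0 : ∀ᵐ x ∂ν, x ∉ Iic (0 : ℝ) := measure_eq_zero_iff_ae_notMem.1 hν
      filter_upwards [h0] with x hx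
      exact Real.exp_log (not_le.1 hx)
    rw [Measure.map_congr this, Measure.map_id]
  have hmul : Measurable (fun p : ℝ × ℝ => p.1 * p.2) := by fun_prop
  conv_lhs => rw [hν']
  rw [mulConv, addConv, Measure.map_prod_map _ _ Real.measurable_exp Real.measurable_exp,
    Measure.map_map hmul (Real.measurable_exp.prodMap Real.measurable_exp),
    Measure.map_map Real.measurable_log
      (hmul.comp (Real.measurable_exp.prodMap Real.measurable_exp))]
  congr 1
  ext p
  simp [← Real.exp_add]

/-- the log-normal distribution (push-forward of `N(m, v)` under `exp`)
is `⊛`-strongly log-unimodal. -/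
theorem logNormal_stronglyLogUnimodal (m : ℝ) (v : NNReal) (hv : 0 < v)
    (μ : Measure ℝ) (hμ : μ = (ProbabilityTheory.gaussianReal m v).map Real.exp) :
    StronglyLogUnimodal μ := by
  subst hμ
  intro ν hν hν0 hlog
  obtain ⟨a, _, hσ⟩ := hlog
  have : IsProbabilityMeasure (ν.map Real.log) :=
    Measure.isProbabilityMeasure_map Real.measurable_log.aemeasurable
  obtain ⟨c, hmono, hanti⟩ := exists_mode_gaussConv m hv ⟨_, hσ⟩
  refine ⟨Real.exp c, Real.exp_pos c, ?_⟩
  rw [IsLogUnimodalWithMode, Real.log_exp, map_log_mulConv _ _ hν0, addConv_gaussianReal m hv]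
  exact ⟨0, gaussConv m v (ν.map Real.log), fun x => (gaussConv_pos m hv _ x).le, hmono, hanti,
    by simp⟩
end
end

section
/- For α ∈ (0,1), the positive Boolean stable law b_α on ℝ₊ = (0,∞), with density (sin(πα)/π)·x^{α−1}/(x^{2α} + 2x^α cos(πα) + 1), is log-unimodal with mode 1. -/
/-!
The substitution `x = exp t` turns the density of the Boolean stable law into the density
`(sin (πα) / π) · u / (u² + 2 u cos (πα) + 1)`, `u = exp (α t)`, of its push-forward under `log`
(the Jacobian `exp t` absorbs the `-1` in the exponent `α - 1`). The map `u ↦ u / (u² + 2uc + 1)`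
increases on `(0, 1]` and decreases on `[1, ∞)`, because comparing its values at `u` and `v`
amounts to the sign of `(v - u) (u v - 1)`. As `u = exp (α t)` is increasing in `t` and equals `1`
at `t = 0`, the push-forward is unimodal with mode `0 = log 1` and has no atom.
-/

open MeasureTheory Set Filter Topology
open scoped ENNReal NNReal

noncomputable section

/-- The density on `ℝ` of the push-forward of the Boolean stable law under `log`. -/
def logBooleanDensity (α t : ℝ) : ℝ :=
  Real.sin (Real.pi * α) / Real.pi *
    (Real.exp (α * t) /
      (Real.exp (α * t) ^ 2 + 2 * Real.exp (α * t) * Real.cos (Real.pi * α) + 1))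

lemma boolean_sin_pos {α : ℝ} (hα : α ∈ Set.Ioo (0 : ℝ) 1) : 0 < Real.sin (Real.pi * α) := by
  apply Real.sin_pos_of_pos_of_lt_pi
  · exact mul_pos Real.pi_pos hα.1
  · nlinarith [Real.pi_pos, hα.2]

/-- The denominator is `(u + cos (πα))² + sin² (πα)`. -/
lemma boolean_denom_pos {α : ℝ} (hα : α ∈ Set.Ioo (0 : ℝ) 1) (u : ℝ) :
    0 < u ^ 2 + 2 * u * Real.cos (Real.pi * α) + 1 := by
  have h := pow_pos (boolean_sin_pos hα) 2
  nlinarith [Real.sin_sq_add_cos_sq (Real.pi * α), sq_nonneg (u + Real.cos (Real.pi * α))]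

lemma logBooleanDensity_nonneg {α : ℝ} (hα : α ∈ Set.Ioo (0 : ℝ) 1) (t : ℝ) :
    0 ≤ logBooleanDensity α t :=
  mul_nonneg (div_nonneg (boolean_sin_pos hα).le Real.pi_pos.le)
    (div_nonneg (Real.exp_pos _).le (boolean_denom_pos hα _).le)

lemma logBooleanDensity_le {α : ℝ} (hα : α ∈ Set.Ioo (0 : ℝ) 1) {s t : ℝ}
    (h : 0 ≤ (Real.exp (α * t) - Real.exp (α * s)) *
      (1 - Real.exp (α * s) * Real.exp (α * t))) :
    logBooleanDensity α s ≤ logBooleanDensity α t := by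
  unfold logBooleanDensity
  refine mul_le_mul_of_nonneg_left ?_ (div_nonneg (boolean_sin_pos hα).le Real.pi_pos.le)
  rw [div_le_div_iff₀ (boolean_denom_pos hα _) (boolean_denom_pos hα _)]
  linarith

lemma logBooleanDensity_monotoneOn {α : ℝ} (hα : α ∈ Set.Ioo (0 : ℝ) 1) :
    MonotoneOn (logBooleanDensity α) (Set.Iio 0) := by
  intro s hs t ht hst
  have hs : s < 0 := hs
  have ht : t < 0 := ht
  apply logBooleanDensity_le hα
  rw [← Real.exp_add]
  refine mul_nonneg (sub_nonneg.2 (Real.exp_le_exp.2 (by nlinarith [hα.1])))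
    (sub_nonneg.2 (Real.exp_le_one_iff.2 (by nlinarith [hα.1])))

lemma logBooleanDensity_antitoneOn {α : ℝ} (hα : α ∈ Set.Ioo (0 : ℝ) 1) :
    AntitoneOn (logBooleanDensity α) (Set.Ioi 0) := by
  intro s hs t ht hst
  have hs : 0 < s := hs
  have ht : 0 < t := ht
  apply logBooleanDensity_le hα
  rw [← Real.exp_add]
  refine mul_nonneg_of_nonpos_of_nonpos
    (sub_nonpos.2 (Real.exp_le_exp.2 (by nlinarith [hα.1])))
    (sub_nonpos.2 (Real.one_le_exp (by nlinarith [hα.1])))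

/-- Change of variables `x = exp t` for measures carried by `(0, ∞)`. -/
lemma map_log_withDensity_indicator (g : ℝ → ℝ) :
    (volume.withDensity
      (fun x => ENNReal.ofReal ((Set.Ioi (0 : ℝ)).indicator g x))).map Real.log =
      volume.withDensity (fun t => ENNReal.ofReal (Real.exp t * g (Real.exp t))) := by
  ext s hs
  have hpre : MeasurableSet (Real.log ⁻¹' s) := Real.measurable_log hs
  have himg : Real.exp '' s = Real.log ⁻¹' s ∩ Set.Ioi 0 := by
    ext x
    constructor
    · rintro ⟨t, ht, rfl⟩
      exact ⟨by simpa using ht, Real.exp_pos t⟩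
    · rintro ⟨hx, hx0⟩
      exact ⟨Real.log x, hx, Real.exp_log hx0⟩
  have hind : (fun x => ENNReal.ofReal ((Set.Ioi (0 : ℝ)).indicator g x)) =
      (Set.Ioi (0 : ℝ)).indicator (fun x => ENNReal.ofReal (g x)) := by
    ext x
    by_cases hx : x ∈ Set.Ioi (0 : ℝ) <;> simp [hx]
  rw [Measure.map_apply Real.measurable_log hs, withDensity_apply _ hpre, withDensity_apply _ hs,
    hind, setLIntegral_indicator measurableSet_Ioi, Set.inter_comm, ← himg,
    lintegral_image_eq_lintegral_abs_deriv_mul hs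
      (fun t _ => (Real.hasDerivAt_exp t).hasDerivWithinAt) Real.exp_injective.injOn]
  refine lintegral_congr fun t => ?_
  rw [abs_of_pos (Real.exp_pos t), ENNReal.ofReal_mul (Real.exp_pos t).le]

/-- the positive Boolean stable law with index `α ∈ (0,1)`, with density
`(sin(πα)/π) · x^(α-1) / (x^(2α) + 2 x^α cos(πα) + 1)` on `ℝ₊`, is log-unimodal with
mode `1`. -/
theorem booleanStable_logUnimodal (α : ℝ) (hα : α ∈ Set.Ioo 0 1)
    (μ : Measure ℝ)
    (hμ : μ = volume.withDensity (fun x => ENNReal.ofReal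
      (Set.indicator (Set.Ioi 0)
        (fun y => Real.sin (Real.pi * α) / Real.pi *
          y ^ (α - 1) / (y ^ (2 * α) + 2 * y ^ α * Real.cos (Real.pi * α) + 1)) x))) :
    IsLogUnimodalWithMode μ 1 := by
  unfold IsLogUnimodalWithMode
  rw [Real.log_one]
  refine ⟨0, logBooleanDensity α, logBooleanDensity_nonneg hα, logBooleanDensity_monotoneOn hα,
    logBooleanDensity_antitoneOn hα, ?_⟩
  rw [hμ, map_log_withDensity_indicator, zero_smul, zero_add]
  congr 1
  ext t
  congr 1
  have h1 : Real.exp t ^ α = Real.exp (α * t) := by rw [← Real.exp_mul, mul_comm]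
  have h2 : Real.exp t ^ (2 * α) = Real.exp (α * t) ^ 2 := by
    rw [← Real.exp_mul, ← Real.exp_nat_mul]
    congr 1
    push_cast
    ring
  have h3 : Real.exp t * Real.exp t ^ (α - 1) = Real.exp (α * t) := by
    rw [← Real.exp_mul, ← Real.exp_add]
    congr 1
    ring
  unfold logBooleanDensity
  rw [h1, h2, ← mul_div_assoc, ← mul_div_assoc, mul_left_comm, h3]
end
end

section
/- Let 0 < α < β, let ν be a probability measure supported in [α,β], let R ∈ (0,π), and define Θ_R(r) = (sin R / R)·∫ rξ/(1 + r²ξ² − 2rξ cos R) dν(ξ) for r > 0. Then Θ_R is strictly increasing on the interval (0, 1/β) and strictly decreasing on the interval (1/α, ∞). -/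
/-!
With `c = cos R`, the integrand is `k (r ξ)` for the kernel `k t = t / (1 + t² - 2tc)`, and
`k a < k b` exactly when `(b - a) (1 - a b) > 0` (`kernel_lt`). For `ξ ∈ [α, β]`, the products
`r ξ` lie in `(0, 1)` when `r < 1/β` and in `(1, ∞)` when `r > 1/α`, so the integrand is strictly
monotone in `r` for every such `ξ`; strictness survives integration because `ν` is a probability
measure carried by `[α, β]` (`integral_kernel_lt`).
-/

open MeasureTheory Set Filter Topology
open scoped ENNReal NNReal

noncomputable section

/-- For `|c| < 1` the kernel `t ↦ t / (1 + t² - 2tc)` compares at `t = a, b` like the sign of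
`(b - a) (1 - a b)`; cross-multiplying, the terms in `c` cancel. -/
lemma kernel_lt {c a b : ℝ} (hc : c ^ 2 < 1) (h : 0 < (b - a) * (1 - a * b)) :
    a / (1 + a ^ 2 - 2 * a * c) < b / (1 + b ^ 2 - 2 * b * c) := by
  rw [div_lt_div_iff₀ (by nlinarith [sq_nonneg (a - c)]) (by nlinarith [sq_nonneg (b - c)])]
  nlinarith

lemma integral_kernel_lt {α β c r s : ℝ} {ν : Measure ℝ} [IsProbabilityMeasure ν]
    (hsupp : ν (Set.Icc α β)ᶜ = 0) (hc : c ^ 2 < 1)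
    (h : ∀ ξ ∈ Set.Icc α β, 0 < (s * ξ - r * ξ) * (1 - (r * ξ) * (s * ξ))) :
    ∫ ξ, r * ξ / (1 + r ^ 2 * ξ ^ 2 - 2 * r * ξ * c) ∂ν <
      ∫ ξ, s * ξ / (1 + s ^ 2 * ξ ^ 2 - 2 * s * ξ * c) ∂ν := by
  have hae : ∀ᵐ ξ ∂ν, ξ ∈ Set.Icc α β := hsupp
  have hint : ∀ q : ℝ,
      Integrable (fun ξ => q * ξ / (1 + q ^ 2 * ξ ^ 2 - 2 * q * ξ * c)) ν := by
    intro q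
    have hcont : Continuous (fun ξ : ℝ => q * ξ / (1 + q ^ 2 * ξ ^ 2 - 2 * q * ξ * c)) := by
      refine Continuous.div (by fun_prop) (by fun_prop) fun ξ => ?_
      nlinarith [sq_nonneg (q * ξ - c)]
    have := hcont.continuousOn.integrableOn_compact (μ := ν) (isCompact_Icc (a := α) (b := β))
    rwa [IntegrableOn, Measure.restrict_eq_self_of_ae_mem hae] at this
  have hlt : ∀ᵐ ξ ∂ν, r * ξ / (1 + r ^ 2 * ξ ^ 2 - 2 * r * ξ * c) <
      s * ξ / (1 + s ^ 2 * ξ ^ 2 - 2 * s * ξ * c) := by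
    filter_upwards [hae] with ξ hξ
    simpa only [mul_pow, mul_assoc] using kernel_lt hc (h ξ hξ)
  have hle := hlt.mono fun ξ hξ => hξ.le
  refine (integral_mono_ae (hint r) (hint s) hle).lt_of_ne fun heq => ?_
  -- equal integrals would force the integrands to agree almost everywhere, and `ν ≠ 0`
  have hae_eq := (integral_eq_iff_of_ae_le (hint r) (hint s) hle).1 heq
  obtain ⟨ξ, h₁, h₂⟩ := (hlt.and hae_eq).exists
  exact h₁.ne h₂

/-- `Θ_R` is strictly increasing on `(0, 1/β)` and strictly decreasing
on `(1/α, ∞)`. -/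
theorem theta_strictMono_strictAnti (α β : ℝ) (hα : 0 < α) (hαβ : α < β)
    (ν : Measure ℝ) [IsProbabilityMeasure ν] (hsupp : ν (Set.Icc α β)ᶜ = 0)
    (R : ℝ) (hR : R ∈ Set.Ioo 0 Real.pi)
    (Θ : ℝ → ℝ)
    (hΘ : ∀ r : ℝ, Θ r = (Real.sin R / R) *
      ∫ ξ, r * ξ / (1 + r ^ 2 * ξ ^ 2 - 2 * r * ξ * Real.cos R) ∂ν) :
    StrictMonoOn Θ (Set.Ioo 0 β⁻¹) ∧ StrictAntiOn Θ (Set.Ioi α⁻¹) := by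
  obtain ⟨hR0, hRpi⟩ := hR
  have hsin : 0 < Real.sin R := Real.sin_pos_of_pos_of_lt_pi hR0 hRpi
  have hc : Real.cos R ^ 2 < 1 := by nlinarith [Real.sin_sq_add_cos_sq R]
  have hfac : 0 < Real.sin R / R := div_pos hsin hR0
  have hβ : 0 < β := hα.trans hαβ
  constructor
  · rintro r ⟨hr0, -⟩ s ⟨hs0, hs⟩ hrs
    rw [hΘ, hΘ]
    refine mul_lt_mul_of_pos_left (integral_kernel_lt hsupp hc fun ξ hξ => ?_) hfac
    have hξ0 : 0 < ξ := hα.trans_le hξ.1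
    have hsξ : s * ξ < 1 := calc
      s * ξ ≤ s * β := by gcongr; exact hξ.2
      _ < β⁻¹ * β := by gcongr
      _ = 1 := inv_mul_cancel₀ hβ.ne'
    have hrsξ : r * ξ < s * ξ := by gcongr
    have hrξ : 0 < r * ξ := by positivity
    exact mul_pos (by linarith) (by nlinarith)
  · intro r hr s _ hrs
    have hr : α⁻¹ < r := hr
    rw [hΘ, hΘ]
    refine mul_lt_mul_of_pos_left (integral_kernel_lt hsupp hc fun ξ hξ => ?_) hfac
    have hξ0 : 0 < ξ := hα.trans_le hξ.1
    have hr0 : 0 < r := (inv_pos.2 hα).trans hr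
    have hrξ : 1 < r * ξ := calc
      1 = α⁻¹ * α := (inv_mul_cancel₀ hα.ne').symm
      _ < r * α := by gcongr
      _ ≤ r * ξ := by gcongr; exact hξ.1
    have hrsξ : r * ξ < s * ξ := by gcongr
    exact mul_pos_of_neg_of_neg (by linarith) (by nlinarith)
end
end

section
/- Let 0 < α < β, let ν be a probability measure supported in [α,β], let R ∈ (0,π) satisfy cos R ≤ (3α⁴ − β⁴)/(2α³β), and define Θ_R(r) = (sin R / R)·∫ rξ/(1 + r²ξ² − 2rξ cos R) dν(ξ) for r > 0. Then Θ_R is strictly concave on the interval (1/β, 1/α) (its second derivative is negative there). -/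
/-!
With `c = cos R` and `f t = t / (1 + t² - 2tc)`, one has `Θ r = (sin R / R) ∫ f (rξ) dν(ξ)`. Since
`1 + t² - 2tc = (t - c)² + sin² R > 0` for every real `t`, the integrand is smooth in `(r, ξ)` on the
whole plane, and as `ν` lives on a compact set, it may be differentiated twice under the integral
(`hasDerivAt_integral_of_compact`). The second derivative of the integrand is
`2ξ² (t³ - 3t + 2c) / (1 + t² - 2tc)³` at `t = rξ`. For `r ∈ (1/β, 1/α)` and `ξ ∈ [α, β]`, `t` lies in
`(α/β, β/α)`, hence `t³ - 3t < (β/α)³ - 3α/β`, and the right-hand side is at most `-2c` by the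
hypothesis on `cos R` (`cubic_neg`). So the integrand has negative second derivative.
-/

open MeasureTheory Set Filter Topology
open scoped ENNReal NNReal

noncomputable section

/-- Differentiation under the integral sign for a jointly continuous integrand with jointly
continuous derivative and a finite measure concentrated on a compact set; the dominating function is
the constant bound of the derivative over a compact box. -/
lemma hasDerivAt_integral_of_compact {ν : Measure ℝ} [IsFiniteMeasure ν] {K : Set ℝ}
    (hK : IsCompact K) (hν : ν Kᶜ = 0) {F F' : ℝ → ℝ → ℝ}
    (hF : Continuous fun p : ℝ × ℝ => F p.1 p.2) (hF' : Continuous fun p : ℝ × ℝ => F' p.1 p.2)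
    (hd : ∀ r ξ, HasDerivAt (fun x => F x ξ) (F' r ξ) r) (r : ℝ) :
    Integrable (F' r) ν ∧ HasDerivAt (fun x => ∫ ξ, F x ξ ∂ν) (∫ ξ, F' r ξ ∂ν) r := by
  have hae : ∀ᵐ ξ ∂ν, ξ ∈ K := mem_ae_iff.2 hν
  have hFr : ∀ x, Continuous (F x) := fun x => hF.comp (Continuous.prodMk_right x)
  have hF'r : ∀ x, Continuous (F' x) := fun x => hF'.comp (Continuous.prodMk_right x)
  obtain ⟨C, hC⟩ := ((isCompact_Icc (a := r - 1) (b := r + 1)).prod hK).exists_bound_of_continuousOn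
    hF'.continuousOn
  obtain ⟨C₀, hC₀⟩ := hK.exists_bound_of_continuousOn (hFr r).continuousOn
  refine hasDerivAt_integral_of_dominated_loc_of_deriv_le (bound := fun _ => C)
    (Icc_mem_nhds (by linarith : r - 1 < r) (by linarith : r < r + 1))
    (Eventually.of_forall fun x => (hFr x).aestronglyMeasurable)
    (Integrable.of_bound (hFr r).aestronglyMeasurable C₀ (hae.mono hC₀))
    (hF'r r).aestronglyMeasurable ?_ (integrable_const C)
    (Eventually.of_forall fun ξ x _ => hd x ξ)
  filter_upwards [hae] with ξ hξ x hx using hC (x, ξ) ⟨hx, hξ⟩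

lemma denom_pos {c : ℝ} (hc : c ^ 2 < 1) (r ξ : ℝ) : 0 < 1 + r ^ 2 * ξ ^ 2 - 2 * r * ξ * c := by
  nlinarith [sq_nonneg (r * ξ - c)]

lemma hasDerivAt_integrand {c : ℝ} (hc : c ^ 2 < 1) (r ξ : ℝ) :
    HasDerivAt (fun x => x * ξ / (1 + x ^ 2 * ξ ^ 2 - 2 * x * ξ * c))
      (ξ * (1 - r ^ 2 * ξ ^ 2) / (1 + r ^ 2 * ξ ^ 2 - 2 * r * ξ * c) ^ 2) r := by
  have hD := (denom_pos hc r ξ).ne'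
  have h1 : HasDerivAt (fun x : ℝ => x * ξ) ξ r := by simpa using (hasDerivAt_id r).mul_const ξ
  have h2 : HasDerivAt (fun x : ℝ => 1 + x ^ 2 * ξ ^ 2 - 2 * x * ξ * c)
      (2 * r * ξ ^ 2 - 2 * ξ * c) r := by
    have := (((hasDerivAt_pow 2 r).mul_const (ξ ^ 2)).const_add 1).sub
      ((((hasDerivAt_id r).const_mul 2).mul_const ξ).mul_const c)
    exact this.congr_deriv (by simp)
  refine (h1.div h2 hD).congr_deriv ?_
  congr 1
  ring

lemma hasDerivAt_integrand_deriv {c : ℝ} (hc : c ^ 2 < 1) (r ξ : ℝ) :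
    HasDerivAt (fun x => ξ * (1 - x ^ 2 * ξ ^ 2) / (1 + x ^ 2 * ξ ^ 2 - 2 * x * ξ * c) ^ 2)
      (2 * ξ ^ 2 * ((r * ξ) ^ 3 - 3 * (r * ξ) + 2 * c) /
        (1 + r ^ 2 * ξ ^ 2 - 2 * r * ξ * c) ^ 3) r := by
  have hD := (denom_pos hc r ξ).ne'
  have h1 : HasDerivAt (fun x : ℝ => ξ * (1 - x ^ 2 * ξ ^ 2)) (-(2 * r * ξ ^ 3)) r := by
    have := (((hasDerivAt_pow 2 r).mul_const (ξ ^ 2)).const_sub 1).const_mul ξ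
    exact this.congr_deriv (by simp; ring)
  have h2 : HasDerivAt (fun x : ℝ => 1 + x ^ 2 * ξ ^ 2 - 2 * x * ξ * c)
      (2 * r * ξ ^ 2 - 2 * ξ * c) r := by
    have := (((hasDerivAt_pow 2 r).mul_const (ξ ^ 2)).const_add 1).sub
      ((((hasDerivAt_id r).const_mul 2).mul_const ξ).mul_const c)
    exact this.congr_deriv (by simp)
  refine (h1.div (h2.pow 2) (pow_ne_zero 2 hD)).congr_deriv ?_
  simp only [Pi.pow_apply]
  rw [div_eq_div_iff (pow_ne_zero 2 (pow_ne_zero 2 hD)) (pow_ne_zero 3 hD)]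
  push_cast
  ring

/-- The sign condition on the second derivative of the integrand: with `t = rξ ∈ (α/β, β/α)`, the
terms `t³` and `-3t` are separately bounded by their values at opposite endpoints. -/
lemma cubic_neg {α β c r ξ : ℝ} (hα : 0 < α) (hαβ : α < β)
    (hc : c ≤ (3 * α ^ 4 - β ^ 4) / (2 * α ^ 3 * β)) (hr : r ∈ Ioo β⁻¹ α⁻¹) (hξ : ξ ∈ Icc α β) :
    (r * ξ) ^ 3 - 3 * (r * ξ) + 2 * c < 0 := by
  have hβ : 0 < β := hα.trans hαβ
  have hξ0 : 0 < ξ := hα.trans_le hξ.1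
  have hr0 : 0 < r := (inv_pos.2 hβ).trans hr.1
  have hlow : α / β < r * ξ := by
    rw [div_eq_inv_mul]
    exact mul_lt_mul hr.1 hξ.1 hα hr0.le
  have hup : r * ξ < β / α := by
    rw [div_eq_inv_mul]
    exact mul_lt_mul hr.2 hξ.2 hξ0 (inv_pos.2 hα).le
  have hcube : (r * ξ) ^ 3 < (β / α) ^ 3 := pow_lt_pow_left₀ hup (by positivity) (by norm_num)
  have heq : 2 * ((3 * α ^ 4 - β ^ 4) / (2 * α ^ 3 * β)) = 3 * (α / β) - (β / α) ^ 3 := by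
    field_simp
  linarith

/-- if `cos R ≤ (3α⁴ - β⁴)/(2α³β)`, then `Θ_R` is strictly concave on
`(1/β, 1/α)`, its second derivative being negative there. -/
theorem theta_strictConcave (α β : ℝ) (hα : 0 < α) (hαβ : α < β)
    (ν : Measure ℝ) [IsProbabilityMeasure ν] (hsupp : ν (Set.Icc α β)ᶜ = 0)
    (R : ℝ) (hR : R ∈ Set.Ioo 0 Real.pi)
    (hcos : Real.cos R ≤ (3 * α ^ 4 - β ^ 4) / (2 * α ^ 3 * β))
    (Θ : ℝ → ℝ)
    (hΘ : ∀ r : ℝ, Θ r = (Real.sin R / R) *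
      ∫ ξ, r * ξ / (1 + r ^ 2 * ξ ^ 2 - 2 * r * ξ * Real.cos R) ∂ν) :
    StrictConcaveOn ℝ (Set.Ioo β⁻¹ α⁻¹) Θ ∧
      ∀ r ∈ Set.Ioo β⁻¹ α⁻¹, deriv (deriv Θ) r < 0 := by
  obtain ⟨hR0, hRπ⟩ := hR
  have hsin : 0 < Real.sin R := Real.sin_pos_of_pos_of_lt_pi hR0 hRπ
  have hc : Real.cos R ^ 2 < 1 := by nlinarith [Real.sin_sq_add_cos_sq R]
  set c := Real.cos R with hcdef
  have hD : ∀ p : ℝ × ℝ, 1 + p.1 ^ 2 * p.2 ^ 2 - 2 * p.1 * p.2 * c ≠ 0 :=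
    fun p => (denom_pos hc p.1 p.2).ne'
  have hF0 : Continuous fun p : ℝ × ℝ =>
      p.1 * p.2 / (1 + p.1 ^ 2 * p.2 ^ 2 - 2 * p.1 * p.2 * c) :=
    Continuous.div (by fun_prop) (by fun_prop) hD
  have hF1 : Continuous fun p : ℝ × ℝ =>
      p.2 * (1 - p.1 ^ 2 * p.2 ^ 2) / (1 + p.1 ^ 2 * p.2 ^ 2 - 2 * p.1 * p.2 * c) ^ 2 :=
    Continuous.div (by fun_prop) (by fun_prop) fun p => pow_ne_zero 2 (hD p)
  have hF2 : Continuous fun p : ℝ × ℝ => 2 * p.2 ^ 2 * ((p.1 * p.2) ^ 3 - 3 * (p.1 * p.2) + 2 * c) /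
      (1 + p.1 ^ 2 * p.2 ^ 2 - 2 * p.1 * p.2 * c) ^ 3 :=
    Continuous.div (by fun_prop) (by fun_prop) fun p => pow_ne_zero 3 (hD p)
  have hd1 := fun r => (hasDerivAt_integral_of_compact isCompact_Icc hsupp
    (F := fun r ξ => r * ξ / (1 + r ^ 2 * ξ ^ 2 - 2 * r * ξ * c))
    (F' := fun r ξ => ξ * (1 - r ^ 2 * ξ ^ 2) / (1 + r ^ 2 * ξ ^ 2 - 2 * r * ξ * c) ^ 2)
    hF0 hF1 (hasDerivAt_integrand hc) r).2
  have hd2 := hasDerivAt_integral_of_compact isCompact_Icc hsupp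
    (F := fun r ξ => ξ * (1 - r ^ 2 * ξ ^ 2) / (1 + r ^ 2 * ξ ^ 2 - 2 * r * ξ * c) ^ 2)
    (F' := fun r ξ => 2 * ξ ^ 2 * ((r * ξ) ^ 3 - 3 * (r * ξ) + 2 * c) /
      (1 + r ^ 2 * ξ ^ 2 - 2 * r * ξ * c) ^ 3)
    hF1 hF2 (hasDerivAt_integrand_deriv hc)
  have hΘd : ∀ r, HasDerivAt Θ (Real.sin R / R *
      ∫ ξ, ξ * (1 - r ^ 2 * ξ ^ 2) / (1 + r ^ 2 * ξ ^ 2 - 2 * r * ξ * c) ^ 2 ∂ν) r := by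
    intro r
    rw [funext hΘ]
    exact (hd1 r).const_mul _
  have hneg : ∀ r ∈ Ioo β⁻¹ α⁻¹, deriv (deriv Θ) r < 0 := by
    intro r hr
    rw [funext fun x => (hΘd x).deriv, ((hd2 r).2.const_mul (Real.sin R / R)).deriv]
    refine mul_neg_of_pos_of_neg (div_pos hsin hR0) ?_
    have hae : ∀ᵐ ξ ∂ν, 2 * ξ ^ 2 * ((r * ξ) ^ 3 - 3 * (r * ξ) + 2 * c) /
        (1 + r ^ 2 * ξ ^ 2 - 2 * r * ξ * c) ^ 3 < 0 := by
      have hmem : ∀ᵐ ξ ∂ν, ξ ∈ Icc α β := mem_ae_iff.2 hsupp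
      filter_upwards [hmem] with ξ hξ
      have hξ0 : 0 < ξ := hα.trans_le hξ.1
      exact div_neg_of_neg_of_pos
        (mul_neg_of_pos_of_neg (by positivity) (cubic_neg hα hαβ hcos hr hξ))
        (pow_pos (denom_pos hc r ξ) 3)
    rw [← neg_pos, ← integral_neg, integral_pos_iff_support_of_nonneg_ae
      (hae.mono fun ξ hξ => (neg_pos.2 hξ).le) (hd2 r).1.neg]
    refine pos_iff_ne_zero.2 fun h0 => ?_
    -- A null support contradicts a.e. negativity, since `ν` is not the zero measure.
    have hzero := measure_eq_zero_iff_ae_notMem.1 h0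
    obtain ⟨ξ, hξ, hξ'⟩ := (hae.and hzero).exists
    exact hξ' (neg_pos.2 hξ).ne'
  exact ⟨strictConcaveOn_of_deriv2_neg' (convex_Ioo _ _)
    (fun r _ => (hΘd r).continuousAt.continuousWithinAt) hneg, hneg⟩
end
end

section
/- Let 0 < α < β with β⁴ − 3α⁴ < 2α³β, let ν be a probability measure supported in [α,β], and set D_{α,β} = 2β²(α+β)²π / √(4α⁶β² − (3α⁴−β⁴)²). Let R ∈ (0,π) satisfy cos R > (3α⁴ − β⁴)/(2α³β), and define Θ_R(r) = (sin R / R)·∫ rξ/(1 + r²ξ² − 2rξ cos R) dν(ξ) for r > 0. Then Θ_R(r) > 1/D_{α,β} for all r ∈ [1/β, 1/α]. -/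
/-!
Put `c₀ = (3α⁴ - β⁴)/(2α³β)`, which lies in `(-1, 1)`, and `R₀ = arccos c₀`, so that `R < R₀ < π`.
The bound splits into two independent estimates.

* Concavity of `sin` on `[0, π]` makes `sin R / R` antitone, so
  `sin R / R ≥ sin R₀ / R₀ > sin R₀ / π`, with `2α³β sin R₀ = √(4α⁶β² - (3α⁴ - β⁴)²)`.
* For `x = rξ ∈ [α/β, β/α]` the kernel satisfies
  `x / (1 + x² - 2x cos R) ≥ x / (1 + x)² ≥ αβ / (α + β)²`, so the integral against the
  probability measure `ν` is at least `αβ / (α + β)²`.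

The product of the two bounds exceeds `sin R₀ / π · αβ / (α + β)²`, which dominates
`1 / D = sin R₀ / π · (α³/β) / (α + β)²` because `α < β`.
-/

open MeasureTheory Set Filter Topology
open scoped ENNReal NNReal

noncomputable section

/-- The Poisson-type kernel `x / (1 + x² - 2xc)` with `|c| < 1` is smallest at the endpoints of
`[α/β, β/α]` (which are swapped by `x ↦ 1/x`), and decreases as `c` decreases to `-1`. -/
lemma kernel_lower_bound {α β x c : ℝ} (hα : 0 < α) (hαβ : α < β) (h1 : α ≤ β * x)
    (h2 : α * x ≤ β) (hc : -1 < c) (hc1 : c < 1) :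
    α * β / (α + β) ^ 2 ≤ x / (1 + x ^ 2 - 2 * x * c) := by
  have hβ : 0 < β := hα.trans hαβ
  have hx : 0 < x := by
    by_contra h
    nlinarith
  have hden : 0 < 1 + x ^ 2 - 2 * x * c := by nlinarith [sq_nonneg (1 - x)]
  rw [div_le_div_iff₀ (by positivity) hden]
  have key : α * β * (1 + x) ^ 2 ≤ x * (α + β) ^ 2 := by
    nlinarith [mul_nonneg (sub_nonneg.2 h1) (sub_nonneg.2 h2)]
  have h3 : 1 + x ^ 2 - 2 * x * c ≤ (1 + x) ^ 2 := by nlinarith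
  exact (mul_le_mul_of_nonneg_left h3 (by positivity)).trans key

lemma sin_div_lt_of_lt {R R₀ : ℝ} (hR : 0 < R) (hlt : R < R₀) (hπ : R₀ < Real.pi) :
    Real.sin R₀ / Real.pi < Real.sin R / R := by
  have h0 : 0 < R₀ := hR.trans hlt
  have hs : 0 < Real.sin R₀ := Real.sin_pos_of_pos_of_lt_pi h0 hπ
  have hslope := strictConcaveOn_sin_Icc.concaveOn.2
    (⟨le_rfl, Real.pi_pos.le⟩ : (0 : ℝ) ∈ Set.Icc 0 Real.pi) ⟨h0.le, hπ.le⟩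
    (sub_nonneg.2 ((div_le_one h0).2 hlt.le)) (div_pos hR h0).le (sub_add_cancel 1 (R / R₀))
  simp only [smul_eq_mul, Real.sin_zero, mul_zero, zero_add, div_mul_cancel₀ _ h0.ne'] at hslope
  calc Real.sin R₀ / Real.pi < Real.sin R₀ / R₀ := div_lt_div_of_pos_left hs h0 hπ
    _ = R / R₀ * Real.sin R₀ / R := by field_simp
    _ ≤ Real.sin R / R := by gcongr

/-- if `cos R > (3α⁴ - β⁴)/(2α³β)`, then `Θ_R(r) > 1/D_{α,β}` for all
`r ∈ [1/β, 1/α]`. -/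
theorem theta_lower_bound (α β : ℝ) (hα : 0 < α) (hαβ : α < β)
    (hβα : β ^ 4 - 3 * α ^ 4 < 2 * α ^ 3 * β)
    (ν : Measure ℝ) [IsProbabilityMeasure ν] (hsupp : ν (Set.Icc α β)ᶜ = 0)
    (D : ℝ) (hD : D = 2 * β ^ 2 * (α + β) ^ 2 * Real.pi /
      Real.sqrt (4 * α ^ 6 * β ^ 2 - (3 * α ^ 4 - β ^ 4) ^ 2))
    (R : ℝ) (hR : R ∈ Set.Ioo 0 Real.pi)
    (hcos : (3 * α ^ 4 - β ^ 4) / (2 * α ^ 3 * β) < Real.cos R)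
    (Θ : ℝ → ℝ)
    (hΘ : ∀ r : ℝ, Θ r = (Real.sin R / R) *
      ∫ ξ, r * ξ / (1 + r ^ 2 * ξ ^ 2 - 2 * r * ξ * Real.cos R) ∂ν) :
    ∀ r ∈ Set.Icc β⁻¹ α⁻¹, 1 / D < Θ r := by
  intro r hr
  obtain ⟨hR0, hRπ⟩ := hR
  have hβ : 0 < β := hα.trans hαβ
  have hr0 : 0 < r := (inv_pos.2 hβ).trans_le hr.1
  have hβr : 1 ≤ β * r := (inv_le_iff_one_le_mul₀' hβ).1 hr.1
  have hαr : α * r ≤ 1 := (le_inv_mul_iff₀ hα).1 (by simpa using hr.2)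
  have hk : 0 < 2 * α ^ 3 * β := by positivity
  set c₀ := (3 * α ^ 4 - β ^ 4) / (2 * α ^ 3 * β) with hc₀
  have hc₀k : 3 * α ^ 4 - β ^ 4 = c₀ * (2 * α ^ 3 * β) := by rw [hc₀]; field_simp
  have hc₀l : -1 < c₀ := by rw [hc₀, lt_div_iff₀ hk]; linarith
  have hcos1 : Real.cos R < 1 := by
    simpa using Real.cos_lt_cos_of_nonneg_of_le_pi le_rfl hRπ.le hR0
  have hc₀u : c₀ < 1 := hcos.trans hcos1
  have hRR₀ : R < Real.arccos c₀ := by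
    rw [← Real.arccos_cos hR0.le hRπ.le]
    exact Real.arccos_lt_arccos hc₀l.le hcos (Real.cos_le_one R)
  have hR₀π : Real.arccos c₀ < Real.pi := by
    rw [← Real.arccos_neg_one]
    exact Real.arccos_lt_arccos le_rfl hc₀l hc₀u.le
  have hsin := sin_div_lt_of_lt hR0 hRR₀ hR₀π
  set s := Real.sin (Real.arccos c₀) with hs
  have hs0 : 0 < s := Real.sin_pos_of_pos_of_lt_pi (hR0.trans hRR₀) hR₀π
  have hsqrt : Real.sqrt (4 * α ^ 6 * β ^ 2 - (3 * α ^ 4 - β ^ 4) ^ 2)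
      = 2 * α ^ 3 * β * s := by
    have h : 4 * α ^ 6 * β ^ 2 - (3 * α ^ 4 - β ^ 4) ^ 2
        = (2 * α ^ 3 * β) ^ 2 * (1 - c₀ ^ 2) := by rw [hc₀k]; ring
    rw [h, Real.sqrt_mul (by positivity), Real.sqrt_sq hk.le, hs, Real.sin_arccos]
  have hint : α * β / (α + β) ^ 2
      ≤ ∫ ξ, r * ξ / (1 + r ^ 2 * ξ ^ 2 - 2 * r * ξ * Real.cos R) ∂ν := by
    have hae : ∀ᵐ ξ ∂ν, ξ ∈ Set.Icc α β := hsupp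
    have hlow : ∀ᵐ ξ ∂ν, α * β / (α + β) ^ 2
        ≤ r * ξ / (1 + r ^ 2 * ξ ^ 2 - 2 * r * ξ * Real.cos R) := by
      filter_upwards [hae] with ξ hξ
      have h := kernel_lower_bound (x := r * ξ) (c := Real.cos R) hα hαβ
        (by nlinarith [hξ.1])
        (by nlinarith [hξ.1, hξ.2, mul_le_mul_of_nonneg_right hαr (hα.le.trans hξ.1)])
        (hc₀l.trans hcos) hcos1
      convert h using 2
      ring
    have hupp : ∀ᵐ ξ ∂ν, r * ξ / (1 + r ^ 2 * ξ ^ 2 - 2 * r * ξ * Real.cos R)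
        ≤ 1 / (2 * (1 - Real.cos R)) := by
      filter_upwards [hae] with ξ hξ
      have hx : 0 < r * ξ := mul_pos hr0 (hα.trans_le hξ.1)
      have hd : 0 < 1 - Real.cos R := sub_pos.2 hcos1
      -- the denominator is `(1 - x)² + 2x(1 - cos R)` with `x = rξ`
      have hden : 2 * (r * ξ) * (1 - Real.cos R)
          ≤ 1 + r ^ 2 * ξ ^ 2 - 2 * r * ξ * Real.cos R := by
        nlinarith [sq_nonneg (1 - r * ξ)]
      rw [div_le_div_iff₀ ((by positivity : (0 : ℝ) < _).trans_le hden) (by positivity)]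
      linarith
    have hI : Integrable
        (fun ξ => r * ξ / (1 + r ^ 2 * ξ ^ 2 - 2 * r * ξ * Real.cos R)) ν := by
      refine Integrable.of_bound (Measurable.aestronglyMeasurable (by fun_prop))
         (1 / (2 * (1 - Real.cos R))) ?_
      filter_upwards [hlow, hupp] with ξ h1 h2
      rwa [Real.norm_of_nonneg (le_trans (by positivity) h1)]
    simpa using integral_mono_ae (integrable_const (α * β / (α + β) ^ 2)) hI hlow
  have hπ := Real.pi_pos
  rw [hΘ, hD, hsqrt]
  calc 1 / (2 * β ^ 2 * (α + β) ^ 2 * Real.pi / (2 * α ^ 3 * β * s))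
      = s / Real.pi * (α ^ 3 / β / (α + β) ^ 2) := by field_simp
    _ ≤ s / Real.pi * (α * β / (α + β) ^ 2) := by
      have h : α ^ 3 / β ≤ α * β := by
        rw [div_le_iff₀ hβ]
        nlinarith [mul_pos hα (mul_pos (sub_pos.2 hαβ) (add_pos hα hβ))]
      gcongr
    _ < Real.sin R / R * (α * β / (α + β) ^ 2) :=
      mul_lt_mul_of_pos_right hsin (by positivity)
    _ ≤ _ := by
      have : 0 ≤ Real.sin R / R := (by positivity : (0 : ℝ) ≤ s / Real.pi).trans hsin.le
      gcongr
end
end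

section
/- Let 0 < α < β with β⁴ − 3α⁴ < 2α³β, let ν be a probability measure supported in [α,β], and set D_{α,β} = 2β²(α+β)²π / √(4α⁶β² − (3α⁴−β⁴)²). For R ∈ (0,π) define Θ_R(r) = (sin R / R)·∫ rξ/(1 + r²ξ² − 2rξ cos R) dν(ξ) for r > 0. Then for every t ≥ D_{α,β} and every R ∈ (0,π), the set {r ∈ (0,∞) : Θ_R(r) = 1/t} has at most two elements. -/
/-!
With `s = log r` and `u = log ξ`, the integrand of `Θ R r` becomes `kern c (s + u)`, where
`c = cos R` and `kern c x = 1 / (2 (cosh x - c))` is an even bump, strictly decreasing in `|x|`.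
Hence `s ↦ ∫ kern c (s + log ξ) dν(ξ)` is strictly increasing for `s ≤ -log β` and strictly
decreasing for `s ≥ -log α`, and the level set has at most two points as soon as the middle one of
three points `s₁ < s₂ < s₃` of the level set cannot lie in `[-log β, -log α]`. In that window
`|s + log ξ| ≤ log (β / α)`, so `cosh (s + log ξ) ≤ C := (α² + β²) / (2 α β)`. There are two cases.

* If `cos R > 0`, then `R < π / 2`, so `sin R / R > 2 / π` and `Θ > 1 / (π C) ≥ 1 / D ≥ 1 / t`
  throughout the window: the level `1 / t` is not attained there.
* If `cos R ≤ 0`, then `kern c` is strictly concave where `cosh x ^ 2 < 2`. The hypothesis on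
  `α, β` gives `C ^ 2 < 2`, so the integral is strictly concave on the window, and
  together with the monotonicity outside it this rules out three points on one level.
-/

open MeasureTheory Set Filter Topology
open scoped ENNReal NNReal

noncomputable section

/-- The integrand of `Θ` in logarithmic coordinates. -/
def kern (c x : ℝ) : ℝ := 1 / (2 * (Real.cosh x - c))

lemma kern_den_pos {c : ℝ} (hc : c < 1) (x : ℝ) : 0 < Real.cosh x - c := by
  linarith [Real.one_le_cosh x]

lemma kern_eq {c r ξ : ℝ} (hr : 0 < r) (hξ : 0 < ξ) :
    r * ξ / (1 + r ^ 2 * ξ ^ 2 - 2 * r * ξ * c) = kern c (Real.log r + Real.log ξ) := by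
  rw [← Real.log_mul hr.ne' hξ.ne', kern, Real.cosh_log (mul_pos hr hξ)]
  have h : 0 < r * ξ := mul_pos hr hξ
  have e : 2 * ((r * ξ + (r * ξ)⁻¹) / 2 - c) =
      (1 + r ^ 2 * ξ ^ 2 - 2 * r * ξ * c) / (r * ξ) := by
    field_simp
    ring
  rw [e, one_div_div]

lemma kern_lt {c x y : ℝ} (hc : c < 1) (h : |x| < |y|) : kern c y < kern c x := by
  have h1 := kern_den_pos hc x
  have h2 := Real.cosh_lt_cosh.2 h
  exact one_div_lt_one_div_of_lt (by linarith) (by linarith)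

lemma continuous_kern {c : ℝ} (hc : c < 1) : Continuous (kern c) := by
  unfold kern
  refine continuous_const.div (by fun_prop) fun x => ?_
  have := kern_den_pos hc x
  positivity

lemma kern_nonneg {c : ℝ} (hc : c < 1) (x : ℝ) : 0 ≤ kern c x := by
  have := kern_den_pos hc x
  unfold kern
  positivity

lemma kern_le {c : ℝ} (hc : c < 1) (x : ℝ) : kern c x ≤ 1 / (2 * (1 - c)) := by
  have := Real.one_le_cosh x
  exact one_div_le_one_div_of_le (by linarith) (by linarith)

lemma integrable_kern {c : ℝ} (hc : c < 1) (ν : Measure ℝ) [IsProbabilityMeasure ν] (s : ℝ) :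
    Integrable (fun ξ => kern c (s + Real.log ξ)) ν := by
  refine Integrable.of_bound (C := 1 / (2 * (1 - c)))
    ((continuous_kern hc).measurable.comp
      (Real.measurable_log.const_add s)).aestronglyMeasurable ?_
  refine Eventually.of_forall fun ξ => ?_
  rw [Real.norm_of_nonneg (kern_nonneg hc _)]
  exact kern_le hc _

lemma hasDerivAt_kern {c : ℝ} (hc : c < 1) (x : ℝ) :
    HasDerivAt (kern c) (-Real.sinh x / (2 * (Real.cosh x - c) ^ 2)) x := by
  have h0 := kern_den_pos hc x
  have h := ((((Real.hasDerivAt_cosh x).sub_const c).const_mul 2).inv (by positivity))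
  have e : kern c = (fun x => 2 * (Real.cosh x - c))⁻¹ := by
    funext y
    simp [kern]
  rw [e]
  refine h.congr_deriv ?_
  field_simp

lemma hasDerivAt_kern' {c : ℝ} (hc : c < 1) (x : ℝ) :
    HasDerivAt (fun x => -Real.sinh x / (2 * (Real.cosh x - c) ^ 2))
      ((Real.cosh x ^ 2 + c * Real.cosh x - 2) / (2 * (Real.cosh x - c) ^ 3)) x := by
  have h0 := kern_den_pos hc x
  have h := (Real.hasDerivAt_sinh x).fun_neg.fun_div
    ((((Real.hasDerivAt_cosh x).sub_const c).fun_pow 2).const_mul 2) (by positivity)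
  refine h.congr_deriv ?_
  have := Real.cosh_sq x
  push_cast
  field_simp
  norm_num
  linear_combination (-2 : ℝ) * this

/-- The second derivative of `kern c` has the sign of `cosh² + c cosh - 2`. -/
lemma strictConcaveOn_kern {c L : ℝ} (hc0 : c ≤ 0) (hL0 : 0 ≤ L)
    (hL : Real.cosh L ^ 2 < 2) : StrictConcaveOn ℝ (Icc (-L) L) (kern c) := by
  have hc : c < 1 := by linarith
  refine strictConcaveOn_of_deriv2_neg (convex_Icc _ _) (continuous_kern hc).continuousOn ?_
  intro x hx
  rw [interior_Icc] at hx
  have e : deriv (kern c) = fun x => -Real.sinh x / (2 * (Real.cosh x - c) ^ 2) :=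
    funext fun y => (hasDerivAt_kern hc y).deriv
  have h0 := kern_den_pos hc x
  simp only [Function.iterate_succ, Function.iterate_zero, Function.comp, id]
  rw [e, (hasDerivAt_kern' hc x).deriv]
  refine div_neg_of_neg_of_pos ?_ (by positivity)
  have h1 : Real.cosh x ≤ Real.cosh L := by
    rw [Real.cosh_le_cosh, abs_of_nonneg hL0]
    exact (abs_lt.2 ⟨hx.1, hx.2⟩).le
  have h2 := Real.one_le_cosh x
  nlinarith

lemma integral_lt_of_ae_lt {ν : Measure ℝ} [IsProbabilityMeasure ν] {f g : ℝ → ℝ}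
    (hf : Integrable f ν) (hg : Integrable g ν) (h : ∀ᵐ ξ ∂ν, f ξ < g ξ) :
    ∫ ξ, f ξ ∂ν < ∫ ξ, g ξ ∂ν := by
  refine lt_of_le_of_ne (integral_mono_ae hf hg (h.mono fun _ => le_of_lt)) fun he => ?_
  have h0 := (integral_eq_iff_of_ae_le hf hg (h.mono fun _ => le_of_lt)).1 he
  obtain ⟨ξ, h1, h2⟩ := (h.and h0).exists
  exact h1.ne h2

lemma encard_le_two_of_no_chain {S : Set ℝ}
    (h : ∀ x ∈ S, ∀ y ∈ S, ∀ z ∈ S, x < y → y < z → False) : S.encard ≤ 2 := by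
  by_contra! hS
  obtain ⟨T, hTS, hT⟩ := Set.exists_subset_encard_eq (Order.add_one_le_of_lt hS)
  obtain ⟨x, y, z, hxy, hxz, hyz, rfl⟩ := Set.encard_eq_three.1 (hT.trans (by norm_num))
  have hx : x ∈ S := hTS (by simp)
  have hy : y ∈ S := hTS (by simp)
  have hz : z ∈ S := hTS (by simp)
  rcases lt_or_gt_of_ne hxy with h1 | h1 <;> rcases lt_or_gt_of_ne hxz with h2 | h2 <;>
    rcases lt_or_gt_of_ne hyz with h3 | h3
  · exact h x hx y hy z hz h1 h3
  · exact h x hx z hz y hy h2 h3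
  · linarith
  · exact h z hz x hx y hy h2 h1
  · exact h y hy x hx z hz h1 h2
  · linarith
  · exact h y hy z hz x hx h3 h2
  · exact h z hz y hy x hx h3 h1

section Potential

/-- `Θ` in the variable `s = log r`, without the prefactor `sin R / R`. -/
def pot (ν : Measure ℝ) (c s : ℝ) : ℝ := ∫ ξ, kern c (s + Real.log ξ) ∂ν

variable {ν : Measure ℝ} [IsProbabilityMeasure ν] {c a b : ℝ}

lemma pot_lt_left (hc : c < 1) (hae : ∀ᵐ ξ ∂ν, Real.log ξ ∈ Icc a b) {s s' : ℝ}
    (h : s < s') (hs : s' ≤ -b) : pot ν c s < pot ν c s' := by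
  refine integral_lt_of_ae_lt (integrable_kern hc ν s) (integrable_kern hc ν s') ?_
  filter_upwards [hae] with ξ hξ
  apply kern_lt hc
  rw [abs_of_nonpos (by linarith [hξ.2]), abs_of_nonpos (by linarith [hξ.2])]
  linarith

lemma pot_lt_right (hc : c < 1) (hae : ∀ᵐ ξ ∂ν, Real.log ξ ∈ Icc a b) {s s' : ℝ}
    (h : s < s') (hs : -a ≤ s) : pot ν c s' < pot ν c s := by
  refine integral_lt_of_ae_lt (integrable_kern hc ν s') (integrable_kern hc ν s) ?_
  filter_upwards [hae] with ξ hξ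
  apply kern_lt hc
  rw [abs_of_nonneg (by linarith [hξ.1]), abs_of_nonneg (by linarith [hξ.1])]
  linarith

lemma pot_strictConcaveOn (hc : c ≤ 0) (hab : a ≤ b) (hC : Real.cosh (b - a) ^ 2 < 2)
    (hae : ∀ᵐ ξ ∂ν, Real.log ξ ∈ Icc a b) :
    StrictConcaveOn ℝ (Icc (-b) (-a)) (pot ν c) := by
  have hc1 : c < 1 := by linarith
  refine ⟨convex_Icc _ _, fun x hx y hy hxy p q hp hq hpq => ?_⟩
  have e : p • pot ν c x + q • pot ν c y =
      ∫ ξ, (p * kern c (x + Real.log ξ) + q * kern c (y + Real.log ξ)) ∂ν := by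
    rw [integral_add ((integrable_kern hc1 ν x).const_mul p)
      ((integrable_kern hc1 ν y).const_mul q), integral_const_mul, integral_const_mul]
    rfl
  rw [e]
  refine integral_lt_of_ae_lt (((integrable_kern hc1 ν x).const_mul p).add
    ((integrable_kern hc1 ν y).const_mul q)) (integrable_kern hc1 ν _) ?_
  filter_upwards [hae] with ξ hξ
  have hk := (strictConcaveOn_kern hc (sub_nonneg.2 hab) hC).2
    (x := x + Real.log ξ) ⟨by linarith [hx.1, hξ.1], by linarith [hx.2, hξ.2]⟩
    (y := y + Real.log ξ) ⟨by linarith [hy.1, hξ.1], by linarith [hy.2, hξ.2]⟩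
    (by simpa using hxy) hp hq hpq
  have e2 : p • (x + Real.log ξ) + q • (y + Real.log ξ) = p • x + q • y + Real.log ξ := by
    simp only [smul_eq_mul]
    linear_combination Real.log ξ * hpq
  rw [e2] at hk
  simpa only [smul_eq_mul] using hk

/-- The bound holds for `s` in the window `[-b, -a]`, where all arguments of the kernel have
absolute value at most `b - a`. -/
lemma lt_pot (hc0 : 0 < c) (hc : c < 1) (hab : a ≤ b)
    (hae : ∀ᵐ ξ ∂ν, Real.log ξ ∈ Icc a b) {s : ℝ} (hs : s ∈ Icc (-b) (-a)) :
    1 / (2 * Real.cosh (b - a)) < pot ν c s := by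
  have e : 1 / (2 * Real.cosh (b - a)) = ∫ _, 1 / (2 * Real.cosh (b - a)) ∂ν := by simp
  rw [e]
  refine integral_lt_of_ae_lt (integrable_const _) (integrable_kern hc ν s) ?_
  filter_upwards [hae] with ξ hξ
  have h1 := kern_den_pos hc (s + Real.log ξ)
  have h2 : Real.cosh (s + Real.log ξ) ≤ Real.cosh (b - a) := by
    rw [Real.cosh_le_cosh, abs_of_nonneg (sub_nonneg.2 hab), abs_le]
    exact ⟨by linarith [hs.1, hξ.1], by linarith [hs.2, hξ.2]⟩
  exact one_div_lt_one_div_of_lt (by linarith) (by linarith)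

/-- If a level is not attained in the window, its level set contains no three points. -/
lemma no_chain_of_window (hc : c < 1) (hae : ∀ᵐ ξ ∂ν, Real.log ξ ∈ Icc a b) {l : ℝ}
    (hl : ∀ s ∈ Icc (-b) (-a), pot ν c s ≠ l) {s₁ s₂ s₃ : ℝ} (h12 : s₁ < s₂) (h23 : s₂ < s₃)
    (e1 : pot ν c s₁ = l) (e2 : pot ν c s₂ = l) (e3 : pot ν c s₃ = l) : False := by
  rcases le_total s₂ (-b) with hb | hb
  · linarith [pot_lt_left hc hae h12 hb]
  rcases le_total (-a) s₂ with ha | ha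
  · linarith [pot_lt_right hc hae h23 ha]
  exact hl s₂ ⟨hb, ha⟩ e2

lemma no_chain_of_concave (hc : c ≤ 0) (hab : a ≤ b) (hC : Real.cosh (b - a) ^ 2 < 2)
    (hae : ∀ᵐ ξ ∂ν, Real.log ξ ∈ Icc a b) {l : ℝ} {s₁ s₂ s₃ : ℝ} (h12 : s₁ < s₂) (h23 : s₂ < s₃)
    (e1 : pot ν c s₁ = l) (e2 : pot ν c s₂ = l) (e3 : pot ν c s₃ = l) : False := by
  have hc1 : c < 1 := by linarith
  rcases le_or_gt s₂ (-b) with hb | hb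
  · linarith [pot_lt_left hc1 hae h12 hb]
  rcases le_or_gt (-a) s₂ with ha | ha
  · linarith [pot_lt_right hc1 hae h23 ha]
  -- Moving the outer points to the boundary of the window does not decrease the potential.
  have k1 : l ≤ pot ν c (max s₁ (-b)) := by
    rcases lt_or_ge s₁ (-b) with h | h
    · rw [max_eq_right h.le]
      linarith [pot_lt_left hc1 hae h le_rfl]
    · rw [max_eq_left h, e1]
  have k3 : l ≤ pot ν c (min s₃ (-a)) := by
    rcases lt_or_ge (-a) s₃ with h | h
    · rw [min_eq_right h.le]
      linarith [pot_lt_right hc1 hae h le_rfl]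
    · rw [min_eq_left h, e3]
  have l1 : max s₁ (-b) < s₂ := max_lt h12 hb
  have l3 : s₂ < min s₃ (-a) := lt_min h23 ha
  have hseg : s₂ ∈ openSegment ℝ (max s₁ (-b)) (min s₃ (-a)) := by
    rw [openSegment_eq_Ioo (l1.trans l3)]
    exact ⟨l1, l3⟩
  have := (pot_strictConcaveOn hc hab hC hae).lt_on_openSegment
    (x := max s₁ (-b)) (y := min s₃ (-a))
    ⟨le_max_right _ _, by linarith⟩ ⟨by linarith, min_le_right _ _⟩ (l1.trans l3).ne hseg
  linarith [le_min k1 k3]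

end Potential

lemma cosh_log_sub_log {α β : ℝ} (hα : 0 < α) (hβ : 0 < β) :
    Real.cosh (Real.log β - Real.log α) = (α ^ 2 + β ^ 2) / (2 * α * β) := by
  rw [← Real.log_div hβ.ne' hα.ne', Real.cosh_log (div_pos hβ hα)]
  field_simp
  ring

lemma cosh_sq_lt_two {α β : ℝ} (hα : 0 < α) (hαβ : α < β)
    (h : β ^ 4 - 3 * α ^ 4 < 2 * α ^ 3 * β) : ((α ^ 2 + β ^ 2) / (2 * α * β)) ^ 2 < 2 := by
  have hβ : 0 < β := hα.trans hαβ
  rw [div_pow, div_lt_iff₀ (by positivity)]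
  have : 0 < α ^ 2 * (3 * β + 2 * α) * (β - α) :=
    mul_pos (by positivity) (sub_pos.2 hαβ)
  nlinarith

/-- Bounding the square root by `2 α³ β` already gives far more than is needed. -/
lemma pi_mul_le_D {α β : ℝ} (hα : 0 < α) (hαβ : α < β)
    (h : β ^ 4 - 3 * α ^ 4 < 2 * α ^ 3 * β) :
    Real.pi * ((α ^ 2 + β ^ 2) / (2 * α * β)) ≤ 2 * β ^ 2 * (α + β) ^ 2 * Real.pi /
      Real.sqrt (4 * α ^ 6 * β ^ 2 - (3 * α ^ 4 - β ^ 4) ^ 2) := by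
  have hβ : 0 < β := hα.trans hαβ
  have hpi := Real.pi_pos
  have h2 : 3 * α ^ 4 - β ^ 4 < 2 * α ^ 3 * β := by
    have h3 : α ^ 4 < β ^ 4 := by gcongr
    have h4 : α ^ 3 * α < α ^ 3 * β := by gcongr
    nlinarith
  have hpos : 0 < 4 * α ^ 6 * β ^ 2 - (3 * α ^ 4 - β ^ 4) ^ 2 := by
    have := mul_pos (sub_pos.2 h) (sub_pos.2 h2)
    nlinarith
  have hs : Real.sqrt (4 * α ^ 6 * β ^ 2 - (3 * α ^ 4 - β ^ 4) ^ 2) ≤ 2 * α ^ 3 * β := by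
    refine Real.sqrt_le_iff.2 ⟨by positivity, ?_⟩
    nlinarith [sq_nonneg (3 * α ^ 4 - β ^ 4)]
  rw [le_div_iff₀ (Real.sqrt_pos.2 hpos)]
  calc Real.pi * ((α ^ 2 + β ^ 2) / (2 * α * β)) *
        Real.sqrt (4 * α ^ 6 * β ^ 2 - (3 * α ^ 4 - β ^ 4) ^ 2)
      ≤ Real.pi * ((α ^ 2 + β ^ 2) / (2 * α * β)) * (2 * α ^ 3 * β) := by gcongr
    _ = Real.pi * (α ^ 2 * (α ^ 2 + β ^ 2)) := by field_simp
    _ ≤ Real.pi * (2 * β ^ 2 * (α + β) ^ 2) := by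
        gcongr
        · nlinarith
        · nlinarith [mul_pos hα hβ]
    _ = 2 * β ^ 2 * (α + β) ^ 2 * Real.pi := by ring

/-- for every `t ≥ D_{α,β}` and every `R ∈ (0,π)`, the level set
`{r > 0 : Θ_R(r) = 1/t}` has at most two elements. -/
theorem theta_level_sets_small (α β : ℝ) (hα : 0 < α) (hαβ : α < β)
    (hβα : β ^ 4 - 3 * α ^ 4 < 2 * α ^ 3 * β)
    (ν : Measure ℝ) [IsProbabilityMeasure ν] (hsupp : ν (Set.Icc α β)ᶜ = 0)
    (D : ℝ) (hD : D = 2 * β ^ 2 * (α + β) ^ 2 * Real.pi /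
      Real.sqrt (4 * α ^ 6 * β ^ 2 - (3 * α ^ 4 - β ^ 4) ^ 2))
    (Θ : ℝ → ℝ → ℝ)
    (hΘ : ∀ R r : ℝ, Θ R r = (Real.sin R / R) *
      ∫ ξ, r * ξ / (1 + r ^ 2 * ξ ^ 2 - 2 * r * ξ * Real.cos R) ∂ν) :
    ∀ t : ℝ, D ≤ t → ∀ R ∈ Set.Ioo 0 Real.pi,
      Set.encard {r : ℝ | 0 < r ∧ Θ R r = 1 / t} ≤ 2 := by
  intro t ht R hR
  have hβ : 0 < β := hα.trans hαβ
  have hsin : 0 < Real.sin R := Real.sin_pos_of_pos_of_lt_pi hR.1 hR.2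
  have hc : Real.cos R < 1 := by
    nlinarith [Real.sin_sq_add_cos_sq R]
  have hA : 0 < Real.sin R / R := div_pos hsin hR.1
  have hab : Real.log α ≤ Real.log β := Real.log_le_log hα hαβ.le
  have hmem : ∀ᵐ ξ ∂ν, ξ ∈ Set.Icc α β := hsupp
  have hae : ∀ᵐ ξ ∂ν, Real.log ξ ∈ Icc (Real.log α) (Real.log β) := by
    filter_upwards [hmem] with ξ hξ
    exact ⟨Real.log_le_log hα hξ.1, Real.log_le_log (hα.trans_le hξ.1) hξ.2⟩
  have hpot : ∀ r, 0 < r → Θ R r = Real.sin R / R * pot ν (Real.cos R) (Real.log r) := by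
    intro r hr
    rw [hΘ, pot]
    congr 1
    refine integral_congr_ae ?_
    filter_upwards [hmem] with ξ hξ
    exact kern_eq hr (hα.trans_le hξ.1)
  have hlev : ∀ r, 0 < r → Θ R r = 1 / t →
      pot ν (Real.cos R) (Real.log r) = 1 / t / (Real.sin R / R) := by
    intro r hr h
    rw [eq_div_iff hA.ne', ← h, hpot r hr, mul_comm]
  have hCosh := cosh_log_sub_log hα hβ
  refine encard_le_two_of_no_chain ?_
  rintro x ⟨hx, ex⟩ y ⟨hy, ey⟩ z ⟨hz, ez⟩ hxy hyz
  have lxy := Real.log_lt_log hx hxy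
  have lyz := Real.log_lt_log hy hyz
  rcases le_or_gt (Real.cos R) 0 with h0 | h0
  · exact no_chain_of_concave h0 hab (by rw [hCosh]; exact cosh_sq_lt_two hα hαβ hβα) hae lxy lyz
      (hlev x hx ex) (hlev y hy ey) (hlev z hz ez)
  · refine no_chain_of_window hc hae ?_ lxy lyz
      (hlev x hx ex) (hlev y hy ey) (hlev z hz ez)
    intro s hs
    refine ne_of_gt (lt_of_le_of_lt ?_ (lt_pot h0 hc hab hae hs))
    have hR2 : R < Real.pi / 2 := by
      by_contra! h
      linarith [Real.cos_nonpos_of_pi_div_two_le_of_le h (by linarith [hR.2, Real.pi_pos])]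
    have hJ : 2 / Real.pi ≤ Real.sin R / R := by
      rw [le_div_iff₀ hR.1]
      exact Real.mul_le_sin hR.1.le hR2.le
    have hCpos : 0 < Real.cosh (Real.log β - Real.log α) := Real.cosh_pos _
    have hDt : Real.pi * Real.cosh (Real.log β - Real.log α) ≤ t := by
      rw [hCosh]
      exact (pi_mul_le_D hα hαβ hβα).trans (hD ▸ ht)
    have hpi := Real.pi_pos
    calc 1 / t / (Real.sin R / R)
        ≤ 1 / (Real.pi * Real.cosh (Real.log β - Real.log α)) / (2 / Real.pi) := by
          gcongr
      _ = 1 / (2 * Real.cosh (Real.log β - Real.log α)) := by field_simp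
end
end

section
/- Let {a_n}_{n≥1} and {w_n}_{n≥1} be sequences of positive reals such that a_n > a_{n+1} for all n, lim_{k→∞} a_k = 0, lim_{k→∞} a_k·a_{k+1}·(a_k + a_{k+1})/(a_k − a_{k+1})² = 0, Σ_{n≥1} w_n = 1, and Σ_{n≥1} w_n/a_n < ∞. Define f(r) = Σ_{n≥1} w_n·a_n·r/(1 − a_n·r)² for those r > 0 with a_n·r ≠ 1 for all n, and set b_k = (a_{k+1}^{-1} + a_k^{-1})/2. Then f(b_k) is well defined for all k (i.e. a_n·b_k ≠ 1 for all n, k) and lim_{k→∞} f(b_k) = 0. -/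
/-! Write `f r = ∑ w n * a n * r / (1 - a n * r) ^ 2` and `ratio k` for the quantity assumed to tend to
zero. With `D k = (a (k+1))⁻¹ - (a k)⁻¹`, the point `b k` is the midpoint of two consecutive terms
of the increasing sequence `(a n)⁻¹`, so it lies at distance at least `D k / 2` from every
`(a n)⁻¹`; hence `|1 - a n * b k| ≥ a n * D k / 2 > 0` (`half_gap_le_abs`). Consequently the `n`-th
summand of `f (b k)` is at most `(w n / a n) * (4 * b k / D k ^ 2)`, and `4 * b k / D k ^ 2` is
exactly `2 * ratio k` (`summand_le`). Summing over `n` gives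
`0 ≤ f (b k) ≤ 2 * ratio k * ∑ w n / a n`, which tends to zero. -/

open MeasureTheory Set Filter Topology
open scoped ENNReal NNReal

noncomputable section

/-- The midpoint of consecutive reciprocals stays half a gap away from every reciprocal. -/
lemma half_gap_le_abs {a : ℕ → ℝ} (ha_pos : ∀ n, 0 < a n) (ha_dec : ∀ n, a (n + 1) < a n)
    (n k : ℕ) :
    a n / 2 * ((a (k + 1))⁻¹ - (a k)⁻¹) ≤ |1 - a n * (((a (k + 1))⁻¹ + (a k)⁻¹) / 2)| := by
  have hanti : Antitone a := antitone_nat_of_succ_le fun n => (ha_dec n).le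
  have hone : a n * (a n)⁻¹ = 1 := mul_inv_cancel₀ (ha_pos n).ne'
  rcases Nat.lt_or_ge k n with h | h
  · have hinv : (a (k + 1))⁻¹ ≤ (a n)⁻¹ := inv_anti₀ (ha_pos n) (hanti h)
    have := mul_le_mul_of_nonneg_left hinv (ha_pos n).le
    exact le_trans (by linarith) (le_abs_self _)
  · have hinv : (a n)⁻¹ ≤ (a k)⁻¹ := inv_anti₀ (ha_pos k) (hanti h)
    have := mul_le_mul_of_nonneg_left hinv (ha_pos n).le
    exact le_trans (by linarith) (neg_le_abs _)

lemma gap_pos {a : ℕ → ℝ} (ha_pos : ∀ n, 0 < a n) (ha_dec : ∀ n, a (n + 1) < a n) (k : ℕ) :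
    0 < (a (k + 1))⁻¹ - (a k)⁻¹ :=
  sub_pos.2 (inv_strictAnti₀ (ha_pos _) (ha_dec k))

/-- Each summand of `f (b k)` splits off the summable factor `w n / a n`, uniformly in `k` up to
the ratio that tends to zero. -/
lemma summand_le {a : ℕ → ℝ} (ha_pos : ∀ n, 0 < a n) (ha_dec : ∀ n, a (n + 1) < a n)
    {w : ℝ} (hw : 0 < w) (n k : ℕ) :
    w * a n * (((a (k + 1))⁻¹ + (a k)⁻¹) / 2) /
        (1 - a n * (((a (k + 1))⁻¹ + (a k)⁻¹) / 2)) ^ 2 ≤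
      w / a n * (2 * (a k * a (k + 1) * (a k + a (k + 1)) / (a k - a (k + 1)) ^ 2)) := by
  have hn := ha_pos n
  have hk := ha_pos k
  have hk1 := ha_pos (k + 1)
  have hgap := gap_pos ha_pos ha_dec k
  have hlow : 0 < a n / 2 * ((a (k + 1))⁻¹ - (a k)⁻¹) := by positivity
  have hsq : (a n / 2 * ((a (k + 1))⁻¹ - (a k)⁻¹)) ^ 2 ≤
      (1 - a n * (((a (k + 1))⁻¹ + (a k)⁻¹) / 2)) ^ 2 := by
    rw [← sq_abs (1 - _)]
    exact pow_le_pow_left₀ hlow.le (half_gap_le_abs ha_pos ha_dec n k) 2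
  calc _ ≤ w * a n * (((a (k + 1))⁻¹ + (a k)⁻¹) / 2) /
        (a n / 2 * ((a (k + 1))⁻¹ - (a k)⁻¹)) ^ 2 :=
        div_le_div_of_nonneg_left (by positivity) (by positivity) hsq
    _ = _ := by
        have hd : a k - a (k + 1) ≠ 0 := (sub_pos.2 (ha_dec k)).ne'
        have hD : (a (k + 1))⁻¹ - (a k)⁻¹ = (a k - a (k + 1)) / (a k * a (k + 1)) := by
          field_simp
        rw [hD]
        field_simp

/-- for the atomic construction, `f(b_k)` is well defined
(the denominators never vanish and the series converges) and `f(b_k) → 0`. -/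
theorem f_bk_tendsto_zero (a w : ℕ → ℝ)
    (ha_pos : ∀ n, 0 < a n) (hw_pos : ∀ n, 0 < w n)
    (ha_dec : ∀ n, a (n + 1) < a n)
    (ha_lim : Tendsto a atTop (𝓝 0))
    (ha_ratio : Tendsto
      (fun k => a k * a (k + 1) * (a k + a (k + 1)) / (a k - a (k + 1)) ^ 2)
      atTop (𝓝 0))
    (hw_sum : HasSum w 1)
    (hwa : Summable (fun n => w n / a n))
    (b : ℕ → ℝ) (hb : ∀ k, b k = ((a (k + 1))⁻¹ + (a k)⁻¹) / 2) :
    (∀ n k, a n * b k ≠ 1) ∧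
    (∀ k, Summable (fun n => w n * a n * b k / (1 - a n * b k) ^ 2)) ∧
    Tendsto (fun k => ∑' n, w n * a n * b k / (1 - a n * b k) ^ 2) atTop (𝓝 0) := by
  obtain rfl : b = fun k => ((a (k + 1))⁻¹ + (a k)⁻¹) / 2 := funext hb
  have hnonneg : ∀ k n, 0 ≤ w n * a n * (((a (k + 1))⁻¹ + (a k)⁻¹) / 2) /
      (1 - a n * (((a (k + 1))⁻¹ + (a k)⁻¹) / 2)) ^ 2 := fun k n => by
    have := hw_pos n
    have := ha_pos n
    have := ha_pos k
    have := ha_pos (k + 1)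
    positivity
  have hle := fun k n => summand_le ha_pos ha_dec (hw_pos n) n k
  have hsum := fun k => Summable.of_nonneg_of_le (hnonneg k) (hle k) (hwa.mul_right _)
  refine ⟨fun n k h => ?_, hsum, ?_⟩
  · have hlow := half_gap_le_abs ha_pos ha_dec n k
    have hpos := mul_pos (half_pos (ha_pos n)) (gap_pos ha_pos ha_dec k)
    rw [sub_eq_zero.2 h.symm, abs_zero] at hlow
    exact absurd hlow hpos.not_ge
  · have hlim := (ha_ratio.const_mul 2).const_mul (∑' n, w n / a n)
    rw [mul_zero, mul_zero] at hlim
    refine squeeze_zero (fun k => tsum_nonneg (hnonneg k)) (fun k => ?_) hlim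
    rw [← tsum_mul_right]
    exact (hsum k).tsum_le_tsum (hle k) (hwa.mul_right _)
end
end
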